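/- arXiv:1705.03208 — 6 statements merged into one kernel-verified Lean document; each statement's English description precedes it below -/
import Mathlib

section
/- Let L be a finite-dimensional nilpotent Lie algebra of nilpotency class c over a field k, with dim(L) = n and dim(γ₂(L)) = m ≥ 1. Then dim(M(L)) ≤ (1/2)(n−m−1)(n+m) − Σ_{i=2}^{min(n−m,c)} (n−m−i), where M(L) is the Schur multiplier of L computed from any free presentation via the Hopf formula. -/
/-- The dimension of the Schur multiplier `M(L) = (R ∩ γ₂(F)) / [R, F]` of a Lie algebra `L`,
computed from the free presentation `π : F → L` with `F = FreeLieAlgebra k X` and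
`R = ker π`, via the Hopf formula. -/
noncomputable def schurMultiplierDim (k : Type*) [Field k] {X L : Type*}
    [LieRing L] [LieAlgebra k L] (π : FreeLieAlgebra k X →ₗ⁅k⁆ L) : ℕ :=
  let R : LieIdeal k (FreeLieAlgebra k X) := π.ker
  let S : Submodule k (FreeLieAlgebra k X) :=
    (R ⊓ LieModule.lowerCentralSeries k (FreeLieAlgebra k X) (FreeLieAlgebra k X) 1).toSubmodule
  let T : Submodule k (FreeLieAlgebra k X) :=
    (⁅R, (⊤ : LieIdeal k (FreeLieAlgebra k X))⁆ : LieIdeal k (FreeLieAlgebra k X)).toSubmodule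
  Module.finrank k (↥S ⧸ T.comap S.subtype)

namespace SchurAux

open Module

section basic
variable (k : Type*) [Field k] (E : Type*) [LieRing E] [LieAlgebra k E]

/-- The lower central series as plain submodules. -/
noncomputable def D (j : ℕ) : Submodule k E :=
  (LieModule.lowerCentralSeries k E E j).toSubmodule

variable {k E}

/-- Right bracketing as a linear map. -/
def adR (k : Type*) [Field k] {E : Type*} [LieRing E] [LieAlgebra k E] (y : E) : E →ₗ[k] E where
  toFun x := ⁅x, y⁆
  map_add' a b := add_lie a b y
  map_smul' c a := smul_lie c a y

lemma mem_D_zero (x : E) : x ∈ D k E 0 := by simp [D]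

lemma lie_mem_D_succ {j : ℕ} (x : E) {y : E} (hy : y ∈ D k E j) : ⁅x, y⁆ ∈ D k E (j + 1) := by
  unfold D
  rw [LieModule.lowerCentralSeries_succ]
  exact LieSubmodule.lie_mem_lie (LieSubmodule.mem_top x) hy

lemma D_succ_le {j : ℕ} {Y : Submodule k E} (h : ∀ x : E, ∀ y ∈ D k E j, ⁅x, y⁆ ∈ Y) :
    D k E (j + 1) ≤ Y := by
  unfold D
  rw [LieModule.lowerCentralSeries_succ, LieSubmodule.lieIdeal_oper_eq_linear_span',
    Submodule.span_le]
  rintro _ ⟨x, -, y, hy, rfl⟩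
  exact h x y hy

lemma lie_mem_D {i : ℕ} : ∀ {j : ℕ} {x y : E}, x ∈ D k E i → y ∈ D k E j →
    ⁅x, y⁆ ∈ D k E (i + j + 1) := by
  induction i with
  | zero =>
    intro j x y _ hy
    have := lie_mem_D_succ x hy
    simpa using this
  | succ i ih =>
    intro j x y hx hy
    have : D k E (i + 1) ≤ (D k E (i + 1 + j + 1)).comap
        (adR k y) := by
      apply D_succ_le
      intro a b hb
      change ⁅⁅a, b⁆, y⁆ ∈ D k E (i + 1 + j + 1)
      rw [lie_lie]
      apply Submodule.sub_mem
      · have := lie_mem_D_succ a (ih hb hy)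
        rwa [show i + 1 + j + 1 = i + j + 1 + 1 by ring]
      · have := ih hb (lie_mem_D_succ a hy)
        rwa [show i + 1 + j + 1 = i + (j + 1) + 1 by ring]
    exact this hx

lemma D_anti (j : ℕ) : D k E (j + 1) ≤ D k E j :=
  LieModule.antitone_lowerCentralSeries k E E (Nat.le_succ j)

lemma map_D {L : Type*} [LieRing L] [LieAlgebra k L] (f : E →ₗ⁅k⁆ L)
    (hf : Function.Surjective f) (j : ℕ) : (D k E j).map (f : E →ₗ[k] L) = D k L j := by
  induction j with
  | zero =>
    apply le_antisymm
    · intro x _; exact mem_D_zero x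
    · intro x _
      obtain ⟨y, rfl⟩ := hf x
      exact ⟨y, mem_D_zero y, rfl⟩
  | succ j ih =>
    apply le_antisymm
    · rw [Submodule.map_le_iff_le_comap]
      apply D_succ_le
      intro x y hy
      simp only [Submodule.mem_comap, LieHom.coe_toLinearMap, LieHom.map_lie]
      apply lie_mem_D_succ
      rw [← ih]; exact ⟨y, hy, rfl⟩
    · apply D_succ_le
      intro x y hy
      rw [← ih] at hy
      obtain ⟨y, hy, rfl⟩ := hy
      obtain ⟨x, rfl⟩ := hf x
      exact ⟨⁅x, y⁆, lie_mem_D_succ x hy, by simp⟩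

lemma lie_left_mem {P Y : Submodule k E} (x : E) (h : P ≤ Y.comap (LieModule.toEnd k E E x))
    {y : E} (hy : y ∈ P) : ⁅x, y⁆ ∈ Y := h hy

lemma lie_right_mem {P Y : Submodule k E} (y : E)
    (h : P ≤ Y.comap (adR k y))
    {x : E} (hx : x ∈ P) : ⁅x, y⁆ ∈ Y := h hx

/-- Commutator-like elements. -/
def W {d : ℕ} (k : Type*) [Field k] {E : Type*} [LieRing E] [LieAlgebra k E]
    (b : Fin d → E) (j : ℕ) (w : E) : Prop :=
  w ∈ D k E j ∧ ∃ t : Finset (Fin d), t.card ≤ j + 1 ∧ ∀ l : ℕ, ∀ v ∈ D k E l,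
    ⁅v, w⁆ ∈ Submodule.span k {z : E | ∃ a ∈ t, ∃ y ∈ D k E (j + l), z = ⁅b a, y⁆}

lemma W_zero {d : ℕ} (b : Fin d → E) (a : Fin d) : W k b 0 (b a) := by
  refine ⟨mem_D_zero _, {a}, by simp, ?_⟩
  intro l v hv
  rw [← lie_skew]
  apply Submodule.neg_mem
  apply Submodule.subset_span
  exact ⟨a, by simp, v, by simpa using hv, rfl⟩

lemma W_succ {d : ℕ} (b : Fin d → E) (a : Fin d) {j : ℕ} {w : E} (h : W k b j w) :
    W k b (j + 1) ⁅b a, w⁆ := by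
  obtain ⟨hw, t, ht, H⟩ := h
  refine ⟨lie_mem_D_succ _ hw, insert a t, (Finset.card_insert_le _ _).trans (by omega), ?_⟩
  intro l v hv
  rw [leibniz_lie]
  apply Submodule.add_mem
  · have h1 : ⁅v, b a⁆ ∈ D k E (l + 1) := by
      rw [← lie_skew]; exact Submodule.neg_mem _ (lie_mem_D_succ _ hv)
    refine Submodule.span_mono ?_ (H (l + 1) _ h1)
    rintro _ ⟨a', ha', y, hy, rfl⟩
    exact ⟨a', Finset.mem_insert_of_mem ha', y, by
      rwa [show j + 1 + l = j + (l + 1) by ring], rfl⟩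
  · apply Submodule.subset_span
    refine ⟨a, Finset.mem_insert_self _ _, _, ?_, rfl⟩
    have := lie_mem_D hv hw
    rwa [show j + 1 + l = l + j + 1 by ring]

variable {L : Type*} [LieRing L] [LieAlgebra k L]

lemma span_W (f : E →ₗ⁅k⁆ L) {d : ℕ} (b : Fin d → E)
    (hb : D k E 0 ≤ Submodule.span k (Set.range b) ⊔ D k E 1 ⊔ LinearMap.ker (f : E →ₗ[k] L))
    (j : ℕ) :
    D k E j ≤ Submodule.span k {w | W k b j w} ⊔ D k E (j + 1) ⊔
      LinearMap.ker (f : E →ₗ[k] L) := by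
  induction j with
  | zero =>
    refine hb.trans (sup_le_sup_right (sup_le_sup_right (Submodule.span_mono ?_) _) _)
    rintro _ ⟨a, rfl⟩
    exact W_zero b a
  | succ j ih =>
    apply D_succ_le
    intro x y hy
    refine lie_left_mem x (sup_le (sup_le (Submodule.span_le.2 ?_) ?_) ?_) (ih hy)
    · intro w hw
      change ⁅x, w⁆ ∈ Submodule.span k {w | W k b (j + 1) w} ⊔ D k E (j + 1 + 1) ⊔
        LinearMap.ker (f : E →ₗ[k] L)
      refine lie_right_mem w (sup_le (sup_le (Submodule.span_le.2 ?_) ?_) ?_) (hb (mem_D_zero x))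
      · rintro _ ⟨a, rfl⟩
        exact Submodule.mem_sup_left (Submodule.mem_sup_left
          (Submodule.subset_span (W_succ b a hw)))
      · intro z hz
        refine Submodule.mem_sup_left (Submodule.mem_sup_right ?_)
        have := lie_mem_D hz hw.1
        rwa [show j + 1 + 1 = 1 + j + 1 by ring]
      · intro z hz
        have hz' : f z = 0 := hz
        refine Submodule.mem_sup_right ?_
        change f ⁅z, w⁆ = 0
        simp [hz']
    · intro z hz
      exact Submodule.mem_sup_left (Submodule.mem_sup_right (lie_mem_D_succ x hz))
    · intro z hz
      have hz' : f z = 0 := hz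
      exact Submodule.mem_sup_right (by simp [hz'])

end basic

section lin
variable {k : Type*} [Field k] {V : Type*} [AddCommGroup V] [Module k V] [FiniteDimensional k V]

lemma exists_compl_basis (A B : Submodule k V) (hAB : A ≤ B) :
    ∃ r : ℕ, r + finrank k A = finrank k B ∧ ∃ u : Fin r → V, (∀ a, u a ∈ B) ∧
      B ≤ Submodule.span k (Set.range u) ⊔ A := by
  obtain ⟨C, hC⟩ := Submodule.exists_isCompl (A.comap B.subtype)
  let β := finBasis k C
  refine ⟨finrank k C, ?_, fun a => ((β a : C) : B), fun a => ((β a : C) : B).2, ?_⟩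
  · rw [add_comm, ← Submodule.finrank_add_eq_of_isCompl hC]
    congr 1
    exact (Submodule.comapSubtypeEquivOfLe hAB).finrank_eq.symm
  · intro x hx
    have : (⟨x, hx⟩ : B) ∈ A.comap B.subtype ⊔ C := by rw [hC.sup_eq_top]; trivial
    obtain ⟨y, hy, z, hz, hyz⟩ := Submodule.mem_sup.1 this
    have hx' : x = (z : V) + (y : V) := by
      rw [add_comm]; exact (congrArg Subtype.val hyz).symm
    rw [hx']
    refine Submodule.add_mem_sup ?_ hy
    have h1 : (⟨z, hz⟩ : C) ∈ Submodule.span k (Set.range β) := by rw [β.span_eq]; trivial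
    have h2 := Submodule.mem_map_of_mem (f := B.subtype ∘ₗ C.subtype) h1
    rw [Submodule.map_span, ← Set.range_comp] at h2
    exact h2

end lin

section main
variable {k : Type*} [Field k] {E : Type*} [LieRing E] [LieAlgebra k E]
variable {L : Type*} [LieRing L] [LieAlgebra k L]

/-- lift of spanning families from `L` to `E` -/
lemma lift_span (f : E →ₗ⁅k⁆ L) (hf : Function.Surjective f) (j r : ℕ) (u : Fin r → L)
    (A : Submodule k E)
    (hu : ∀ a, u a ∈ D k L j)
    (hs : D k L j ≤ Submodule.span k (Set.range u) ⊔ A.map (f : E →ₗ[k] L)) :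
    ∃ v : Fin r → E, (∀ a, v a ∈ D k E j) ∧
      D k E j ≤ Submodule.span k (Set.range v) ⊔ A ⊔ LinearMap.ker (f : E →ₗ[k] L) := by
  have : ∀ a, ∃ x ∈ D k E j, (f : E →ₗ[k] L) x = u a := by
    intro a
    have := hu a
    rw [← map_D f hf] at this
    exact this
  choose v hv hvu using this
  refine ⟨v, hv, ?_⟩
  rw [← LinearMap.map_le_map_iff, map_D f hf, Submodule.map_sup, Submodule.map_span,
    ← Set.range_comp]
  have e : (f : E →ₗ[k] L) ∘ v = u := funext hvu
  rw [e]
  exact hs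

/-- The basic step. -/
lemma step [FiniteDimensional k L] (f : E →ₗ⁅k⁆ L) (hf : Function.Surjective f)
    (Q : Submodule k E) (hQ : ∀ x r : E, f r = 0 → ⁅x, r⁆ ∈ Q)
    {d : ℕ} (b : Fin d → E)
    (hb : D k E 0 ≤ Submodule.span k (Set.range b) ⊔ D k E 1 ⊔ LinearMap.ker (f : E →ₗ[k] L))
    (j : ℕ) (hj : ¬ D k L j ≤ D k L (j + 1)) :
    ∃ s : Finset E, (s.card + min d (d - (j + 1)) + d * finrank k (D k L (j + 1)) ≤
      d * finrank k (D k L j)) ∧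
      D k E (j + 1) ≤ Submodule.span k (s : Set E) ⊔ (D k E (j + 2) ⊔ Q) := by
  classical
  obtain ⟨w, hw, hfw⟩ : ∃ w, W k b j w ∧ f w ∉ D k L (j + 1) := by
    by_contra! hcon
    apply hj
    have h1 := Submodule.map_mono (f := (f : E →ₗ[k] L)) (span_W f b hb j)
    rw [map_D f hf] at h1
    refine h1.trans ?_
    rw [Submodule.map_le_iff_le_comap]
    refine sup_le (sup_le (Submodule.span_le.2 hcon) ?_) ?_
    · rw [← Submodule.map_le_iff_le_comap, map_D f hf]
    · intro z hz
      have hz' : f z = 0 := hz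
      simp [hz']
  have hwD := hw.1
  have hfwD : f w ∈ D k L j := by rw [← map_D f hf]; exact ⟨w, hwD, rfl⟩
  have hrank : finrank k (Submodule.span k {f w} ⊔ D k L (j + 1) : Submodule k L)
      = finrank k (D k L (j + 1)) + 1 := by
    have hw0 : f w ≠ 0 := fun h => hfw (h ▸ Submodule.zero_mem _)
    have h := Submodule.finrank_sup_add_finrank_inf_eq (Submodule.span k {f w}) (D k L (j + 1))
    have hd : Submodule.span k {f w} ⊓ D k L (j + 1) = ⊥ := by
      rw [← disjoint_iff, disjoint_comm]
      exact (Submodule.disjoint_span_singleton' hw0).2 hfw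
    rw [hd, finrank_bot, finrank_span_singleton hw0] at h
    omega
  obtain ⟨r, hr, u, hu, hus⟩ := exists_compl_basis
    (Submodule.span k {f w} ⊔ D k L (j + 1)) (D k L j)
    (sup_le (by simpa using hfwD) (D_anti j))
  obtain ⟨v, hv, hvs⟩ := lift_span f hf j r u (Submodule.span k {w} ⊔ D k E (j + 1)) hu (by
    rw [Submodule.map_sup, map_D f hf, Submodule.map_span, Set.image_singleton]
    exact hus)
  obtain ⟨-, t, ht, htW⟩ := hw
  refine ⟨(Finset.univ.image fun p : Fin d × Fin r => ⁅b p.1, v p.2⁆) ∪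
    t.image (fun a => ⁅b a, w⁆), ?_, ?_⟩
  · have h1 := Finset.card_union_le (Finset.univ.image fun p : Fin d × Fin r => ⁅b p.1, v p.2⁆)
      (t.image (fun a => ⁅b a, w⁆))
    have h2 : (Finset.univ.image fun p : Fin d × Fin r => ⁅b p.1, v p.2⁆).card ≤ d * r :=
      Finset.card_image_le.trans (by simp)
    have h3 : (t.image (fun a => ⁅b a, w⁆)).card ≤ t.card := Finset.card_image_le
    have h4 : t.card ≤ d := by simpa using Finset.card_le_univ t
    rw [← hr, hrank]
    have : d * (r + (finrank k (D k L (j + 1)) + 1)) =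
      d * r + d * finrank k (D k L (j + 1)) + d := by ring
    omega
  · set s := (Finset.univ.image fun p : Fin d × Fin r => ⁅b p.1, v p.2⁆) ∪
      t.image (fun a => ⁅b a, w⁆) with hs
    set Y := Submodule.span k (s : Set E) ⊔ (D k E (j + 2) ⊔ Q) with hY
    have hYD : ∀ z ∈ D k E (j + 2), z ∈ Y := fun z hz =>
      Submodule.mem_sup_right (Submodule.mem_sup_left hz)
    have hYQ : ∀ z ∈ Q, z ∈ Y := fun z hz =>
      Submodule.mem_sup_right (Submodule.mem_sup_right hz)
    have hYs : ∀ z ∈ s, z ∈ Y := fun z hz =>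
      Submodule.mem_sup_left (Submodule.subset_span hz)
    have hdec : ∀ x : E, (∀ a, ⁅x, v a⁆ ∈ Y) → ⁅x, w⁆ ∈ Y → ∀ y ∈ D k E j, ⁅x, y⁆ ∈ Y := by
      intro x h1 h2 y hy
      refine lie_left_mem x (sup_le (sup_le (Submodule.span_le.2 ?_)
        (sup_le (Submodule.span_le.2 ?_) ?_)) ?_) (hvs hy)
      · rintro _ ⟨a, rfl⟩; exact h1 a
      · intro z hz
        rw [Set.mem_singleton_iff] at hz
        rw [hz]; exact h2
      · intro z hz; exact hYD _ (lie_mem_D_succ x hz)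
      · intro z hz; exact hYQ _ (hQ x z hz)
    have hbv : ∀ a c, ⁅b a, v c⁆ ∈ Y := fun a c => hYs _ (by
      rw [hs]
      exact Finset.mem_union_left _ (Finset.mem_image_of_mem _ (Finset.mem_univ (a, c))))
    have hbw : ∀ a ∈ t, ⁅b a, w⁆ ∈ Y := fun a ha => hYs _ (by
      rw [hs]
      exact Finset.mem_union_right _ (Finset.mem_image_of_mem _ ha))
    apply D_succ_le
    intro x y hy
    refine hdec x ?_ ?_ y hy
    · intro c
      refine lie_right_mem (v c) (sup_le (sup_le (Submodule.span_le.2 ?_) ?_) ?_)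
        (hb (mem_D_zero x))
      · rintro _ ⟨a, rfl⟩; exact hbv a c
      · intro z hz
        apply hYD
        have := lie_mem_D hz (hv c)
        rwa [show j + 2 = 1 + j + 1 by ring]
      · intro z hz
        apply hYQ
        have := Q.neg_mem (hQ (v c) z hz)
        rwa [lie_skew] at this
    · have h1 := htW 0 x (mem_D_zero x)
      refine (Submodule.span_le.2 ?_) h1
      rintro _ ⟨a, ha, z, hz, rfl⟩
      exact hdec (b a) (hbv a) (hbw a ha) z (by simpa using hz)

lemma first (f : E →ₗ⁅k⁆ L)
    (Q : Submodule k E) (hQ : ∀ x r : E, f r = 0 → ⁅x, r⁆ ∈ Q)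
    {d : ℕ} (b : Fin d → E)
    (hb : D k E 0 ≤ Submodule.span k (Set.range b) ⊔ D k E 1 ⊔ LinearMap.ker (f : E →ₗ[k] L)) :
    ∃ s : Finset E, 2 * s.card ≤ d * (d - 1) ∧
      D k E 1 ≤ Submodule.span k (s : Set E) ⊔ (D k E 2 ⊔ Q) := by
  classical
  refine ⟨Finset.univ.image fun p : (Σ j : Fin d, Fin j) => ⁅b (p.2.castLT (p.2.2.trans p.1.2)),
    b p.1⁆, ?_, ?_⟩
  · rw [mul_comm, ← Finset.sum_range_id_mul_two]
    apply Nat.mul_le_mul_right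
    refine Finset.card_image_le.trans ?_
    simp [Finset.card_univ, Fin.sum_univ_eq_sum_range (fun i => i) d]
  · set s := Finset.univ.image fun p : (Σ j : Fin d, Fin j) =>
      ⁅b (p.2.castLT (p.2.2.trans p.1.2)), b p.1⁆ with hs
    set Y := Submodule.span k (s : Set E) ⊔ (D k E 2 ⊔ Q) with hY
    have hYD : ∀ z ∈ D k E 2, z ∈ Y := fun z hz =>
      Submodule.mem_sup_right (Submodule.mem_sup_left hz)
    have hYQ : ∀ z ∈ Q, z ∈ Y := fun z hz =>
      Submodule.mem_sup_right (Submodule.mem_sup_right hz)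
    have hlt : ∀ i j : Fin d, i < j → ⁅b i, b j⁆ ∈ Y := by
      intro i j hij
      refine Submodule.mem_sup_left (Submodule.subset_span ?_)
      rw [hs]
      exact Finset.mem_coe.2 (Finset.mem_image.2 ⟨⟨j, ⟨i, hij⟩⟩, Finset.mem_univ _, rfl⟩)
    have hall : ∀ i j : Fin d, ⁅b i, b j⁆ ∈ Y := by
      intro i j
      rcases lt_trichotomy i j with h | h | h
      · exact hlt i j h
      · rw [h, lie_self]; exact Y.zero_mem
      · rw [← lie_skew]; exact Y.neg_mem (hlt j i h)
    apply D_succ_le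
    intro x y hy
    refine lie_left_mem x (sup_le (sup_le (Submodule.span_le.2 ?_) ?_) ?_) (hb hy)
    · rintro _ ⟨c, rfl⟩
      change ⁅x, b c⁆ ∈ Y
      refine lie_right_mem (b c) (sup_le (sup_le (Submodule.span_le.2 ?_) ?_) ?_)
        (hb (mem_D_zero x))
      · rintro _ ⟨a, rfl⟩; exact hall a c
      · intro z hz
        apply hYD
        exact lie_mem_D (j := 0) hz (mem_D_zero (b c))
      · intro z hz
        apply hYQ
        have := Q.neg_mem (hQ (b c) z hz)
        rwa [lie_skew] at this
    · intro z hz; exact hYD _ (lie_mem_D_succ x hz)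
    · intro z hz; exact hYQ _ (hQ x z hz)

lemma D_stable {i : ℕ} (h : D k L i ≤ D k L (i + 1)) : ∀ l, D k L i ≤ D k L (i + l) := by
  intro l
  induction l with
  | zero => exact le_rfl
  | succ l ih =>
    refine h.trans (D_succ_le fun x y hy => ?_)
    exact lie_mem_D_succ x (ih hy)

lemma D_le_of_le {i j : ℕ} (h : i ≤ j) : D k L j ≤ D k L i :=
  LieModule.antitone_lowerCentralSeries k L L h

lemma total [FiniteDimensional k L] (f : E →ₗ⁅k⁆ L) (hf : Function.Surjective f)
    (Q : Submodule k E) (hQ : ∀ x r : E, f r = 0 → ⁅x, r⁆ ∈ Q)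
    {d : ℕ} (b : Fin d → E)
    (hb : D k E 0 ≤ Submodule.span k (Set.range b) ⊔ D k E 1 ⊔ LinearMap.ker (f : E →ₗ[k] L))
    (c : ℕ) (hc₁ : D k L c = ⊥) (hc₂ : D k L (c - 1) ≠ ⊥) :
    ∀ j, j + 1 ≤ c → ∃ s : Finset E,
      (2 * s.card : ℤ) ≤ d * (d - 1) + 2 * d * (finrank k (D k L 1) - finrank k (D k L (j + 1)))
        - 2 * ∑ i ∈ Finset.Icc 2 (min d (j + 1)), ((d : ℤ) - i) ∧
      D k E 1 ≤ Submodule.span k (s : Set E) ⊔ (D k E (j + 2) ⊔ Q) := by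
  classical
  intro j
  induction j with
  | zero =>
    intro _
    obtain ⟨s, hs, h⟩ := first f Q hQ b hb
    refine ⟨s, ?_, h⟩
    have : Finset.Icc 2 (min d (0 + 1)) = ∅ := by
      apply Finset.Icc_eq_empty; omega
    rw [this]
    rcases d with _ | d
    · simp at hs; simp [hs]
    · simp at hs ⊢
      have : (2 * s.card : ℤ) ≤ (d + 1) * d := by exact_mod_cast hs
      linarith
  | succ j ih =>
    intro hj
    obtain ⟨s, hs, h⟩ := ih (by omega)
    obtain ⟨s', hs', h'⟩ := step f hf Q hQ b hb (j + 1) (by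
      intro hle
      apply hc₂
      have h1 := D_stable hle (c - (j + 1))
      rw [show j + 1 + (c - (j + 1)) = c by omega, hc₁] at h1
      exact le_bot_iff.1 ((D_le_of_le (by omega)).trans h1))
    refine ⟨s ∪ s', ?_, ?_⟩
    · have hu : ((s ∪ s').card : ℤ) ≤ s.card + s'.card := by
        exact_mod_cast Finset.card_union_le s s'
      have hs'' : (s'.card : ℤ) + (d - (j + 2) : ℕ) + d * finrank k (D k L (j + 2)) ≤
          d * finrank k (D k L (j + 1)) := by
        have : s'.card + (d - (j + 2)) + d * finrank k (D k L (j + 2)) ≤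
          d * finrank k (D k L (j + 1)) := by
          have e : min d (d - (j + 1 + 1)) = d - (j + 2) := by omega
          rw [e] at hs'
          exact hs'
        exact_mod_cast this
      have hsum : ∑ i ∈ Finset.Icc 2 (min d (j + 1 + 1)), ((d : ℤ) - i) ≤
          ∑ i ∈ Finset.Icc 2 (min d (j + 1)), ((d : ℤ) - i) + (d - (j + 2) : ℕ) := by
        by_cases hd : j + 2 ≤ d
        · rw [min_eq_right (by omega : j + 1 + 1 ≤ d), min_eq_right (by omega : j + 1 ≤ d),
            Finset.sum_Icc_succ_top (by omega)]
          push_cast [hd]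
          linarith
        · rw [min_eq_left (by omega : d ≤ j + 1 + 1), min_eq_left (by omega : d ≤ j + 1)]
          simp
      have e : j + 1 + 1 = j + 2 := rfl
      rw [e] at hsum ⊢
      nlinarith
    · refine h.trans (sup_le ?_ (sup_le (h'.trans (sup_le ?_ ?_)) ?_))
      · refine le_sup_of_le_left (Submodule.span_mono ?_)
        simp
      · refine le_sup_of_le_left (Submodule.span_mono ?_)
        simp
      · exact le_sup_right
      · exact le_sup_of_le_right le_sup_right

lemma finrank_quot_le {k : Type*} [Field k] {A B : Type*} [AddCommGroup A] [Module k A]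
    [AddCommGroup B] [Module k B] [FiniteDimensional k B] (h : A →ₗ[k] B) (K : Submodule k A)
    (hk : LinearMap.ker h = K) : finrank k (A ⧸ K) ≤ finrank k B := by
  subst hk
  exact h.quotKerEquivRange.finrank_eq.trans_le (Submodule.finrank_le _)

lemma final {k : Type*} [Field k] {V U : Type*} [AddCommGroup V] [Module k V]
    [AddCommGroup U] [Module k U] (f : V →ₗ[k] U) (S D T : Submodule k V) (s : Finset V)
    (hD : D ≤ Submodule.span k (s : Set V) ⊔ T) (hS : ∀ x ∈ S, x ∈ D ∧ f x = 0)
    (hT : ∀ x ∈ T, f x = 0) :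
    finrank k (S ⧸ T.comap S.subtype) + finrank k (D.map f) ≤ s.card := by
  classical
  have hT' : T ≤ LinearMap.ker f := hT
  let P := D.map T.mkQ
  have hP : P ≤ Submodule.span k ((s.image T.mkQ : Finset _) : Set (V ⧸ T)) := by
    refine (Submodule.map_mono hD).trans ?_
    rw [Submodule.map_sup, Submodule.map_span]
    simp
  have : FiniteDimensional k P := Submodule.finiteDimensional_of_le hP
  have hPc : finrank k P ≤ s.card :=
    (Submodule.finrank_mono hP).trans ((finrank_span_finset_le_card _).trans Finset.card_image_le)
  let g : P →ₗ[k] U := (T.liftQ f hT').domRestrict P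
  have hg := LinearMap.finrank_range_add_finrank_ker g
  have hr : LinearMap.range g = D.map f := by
    rw [LinearMap.range_domRestrict, ← Submodule.map_comp, Submodule.liftQ_mkQ]
  let h0 : S →ₗ[k] LinearMap.ker g :=
    { toFun := fun x => ⟨⟨T.mkQ x, ⟨x, (hS x x.2).1, rfl⟩⟩, by
        rw [LinearMap.mem_ker]
        exact (hS x x.2).2⟩
      map_add' := fun x y => by ext; simp
      map_smul' := fun c x => by ext; simp }
  have hk : LinearMap.ker h0 = T.comap S.subtype := by
    ext x
    rw [LinearMap.mem_ker, Submodule.mem_comap, ← Submodule.Quotient.mk_eq_zero T]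
    constructor
    · intro hx
      exact congrArg (fun z : LinearMap.ker g => ((z : P) : V ⧸ T)) hx
    · intro hx
      exact Subtype.ext (Subtype.ext hx)
  have h1 : finrank k (S ⧸ T.comap S.subtype) ≤ finrank k (LinearMap.ker g) := by
    exact finrank_quot_le (k := k) (A := S) (B := LinearMap.ker g) h0 (T.comap S.subtype) hk
  rw [hr] at hg
  omega

end main

end SchurAux

/-- If `L` is a finite-dimensional nilpotent Lie algebra of class `c` with `dim L = n` and
`dim γ₂(L) = m ≥ 1`, then
`dim M(L) ≤ (1/2)(n−m−1)(n+m) − ∑_{i=2}^{min(n−m,c)} (n−m−i)`. -/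
theorem schur_multiplier_dim_le
    (k : Type*) [Field k] (L : Type*) [LieRing L] [LieAlgebra k L]
    [FiniteDimensional k L] (c : ℕ)
    (hc₁ : LieModule.lowerCentralSeries k L L c = ⊥)
    (hc₂ : LieModule.lowerCentralSeries k L L (c - 1) ≠ ⊥)
    (n m : ℕ) (hn : Module.finrank k L = n)
    (hm : Module.finrank k (LieModule.lowerCentralSeries k L L 1 : LieSubmodule k L L) = m)
    (hm₁ : 1 ≤ m)
    (X : Type*) (π : FreeLieAlgebra k X →ₗ⁅k⁆ L) (hπ : Function.Surjective π) :
    (2 * schurMultiplierDim k π : ℤ) ≤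
      ((n : ℤ) - m - 1) * ((n : ℤ) + m)
        - 2 * ∑ i ∈ Finset.Icc 2 (min (n - m) c), ((n : ℤ) - m - i) := by
  classical
  have hc₁' : SchurAux.D k L c = ⊥ := by simp [SchurAux.D, hc₁]
  have hc₂' : SchurAux.D k L (c - 1) ≠ ⊥ := by simpa [SchurAux.D] using hc₂
  have hm' : Module.finrank k (SchurAux.D k L 1) = m := hm
  have hc : 2 ≤ c := by
    by_contra hlt
    have h1 : SchurAux.D k L 1 ≤ ⊥ := hc₁' ▸ SchurAux.D_le_of_le (by omega : c ≤ 1)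
    rw [le_bot_iff.1 h1, finrank_bot] at hm'
    omega
  obtain ⟨d, hd, u, hu, hus⟩ := SchurAux.exists_compl_basis (SchurAux.D k L 1) (SchurAux.D k L 0)
    (SchurAux.D_anti 0)
  have h0 : Module.finrank k (SchurAux.D k L 0) = n := by
    rw [← hn]
    have : SchurAux.D k L 0 = ⊤ := by ext x; simp [SchurAux.mem_D_zero]
    rw [this, finrank_top]
  rw [h0, hm'] at hd
  obtain ⟨b, -, hb⟩ := SchurAux.lift_span π hπ 0 d u (SchurAux.D k (FreeLieAlgebra k X) 1) hu (by
    rw [SchurAux.map_D π hπ]; exact hus)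
  let R : LieIdeal k (FreeLieAlgebra k X) := π.ker
  let S : Submodule k (FreeLieAlgebra k X) :=
    (R ⊓ LieModule.lowerCentralSeries k (FreeLieAlgebra k X) (FreeLieAlgebra k X) 1).toSubmodule
  let T : Submodule k (FreeLieAlgebra k X) :=
    (⁅R, (⊤ : LieIdeal k (FreeLieAlgebra k X))⁆ : LieIdeal k (FreeLieAlgebra k X)).toSubmodule
  have hT : ∀ x r : FreeLieAlgebra k X, π r = 0 → ⁅x, r⁆ ∈ T := by
    intro x r hr
    rw [← lie_skew]
    apply T.neg_mem
    exact LieSubmodule.lie_mem_lie (by simpa [R] using hr) (LieSubmodule.mem_top x)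
  obtain ⟨s, hs, hsp⟩ := SchurAux.total π hπ T hT b hb c hc₁' hc₂' (c - 1) (by omega)
  rw [show c - 1 + 1 = c by omega, hc₁', hm', finrank_bot] at hs
  have hlast : SchurAux.D k (FreeLieAlgebra k X) (c - 1 + 2) ≤ T := by
    apply SchurAux.D_succ_le
    intro x y hy
    apply hT
    have h1 : π y ∈ SchurAux.D k L (c - 1 + 1) := by
      rw [← SchurAux.map_D π hπ]; exact ⟨y, hy, rfl⟩
    rw [show c - 1 + 1 = c by omega, hc₁'] at h1
    simpa using h1
  have hsp' : SchurAux.D k (FreeLieAlgebra k X) 1 ≤ Submodule.span k (s : Set _) ⊔ T :=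
    hsp.trans (sup_le_sup_left (sup_le hlast le_rfl) _)
  have hfin := SchurAux.final (π : FreeLieAlgebra k X →ₗ[k] L) S
    (SchurAux.D k (FreeLieAlgebra k X) 1) T s hsp' (fun x hx => ⟨hx.2, by
      have : x ∈ R := hx.1
      simpa [R] using this⟩) (by
      intro x hx
      have : x ∈ R := (LieSubmodule.lie_le_left R ⊤) hx
      simpa [R] using this)
  rw [SchurAux.map_D π hπ, hm'] at hfin
  change (2 * (Module.finrank k (↥S ⧸ T.comap S.subtype) : ℕ) : ℤ) ≤ _
  have hdn : n - m = d := by omega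
  rw [hdn]
  have hdn' : (n : ℤ) = d + m := by exact_mod_cast hd.symm
  have hfin' : (Module.finrank k (↥S ⧸ T.comap S.subtype) : ℤ) + m ≤ s.card := by
    exact_mod_cast hfin
  have e : ∀ i : ℕ, (n : ℤ) - m - i = d - i := fun i => by rw [hdn']; ring
  simp only [e]
  rw [hdn']
  push_cast at hs
  nlinarith
end

section
/- A finite-dimensional Lie algebra L of dimension n over a field k is abelian if and only if dim(M(L)) = (1/2)n(n−1), where M(L) is the Schur multiplier of L computed from any free presentation via the Hopf formula. -/
/-- Step-two nilpotent Lie algebra on `V × ⋀²V`. -/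
def SMHeis (k V : Type*) [Field k] [AddCommGroup V] [Module k V] := V × (⋀[k]^2 V)

namespace SMHeis

variable (k V : Type*) [Field k] [AddCommGroup V] [Module k V]

instance : AddCommGroup (SMHeis k V) := inferInstanceAs (AddCommGroup (V × (⋀[k]^2 V)))

instance : Module k (SMHeis k V) := inferInstanceAs (Module k (V × (⋀[k]^2 V)))

/-- First projection. -/
def fstL : SMHeis k V →ₗ[k] V := LinearMap.fst k V (⋀[k]^2 V)

/-- Second projection. -/
def sndL : SMHeis k V →ₗ[k] (⋀[k]^2 V) := LinearMap.snd k V (⋀[k]^2 V)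

/-- Second inclusion. -/
def inrL : (⋀[k]^2 V) →ₗ[k] SMHeis k V := LinearMap.inr k V (⋀[k]^2 V)

/-- First inclusion. -/
def inlL : V →ₗ[k] SMHeis k V := LinearMap.inl k V (⋀[k]^2 V)

variable {V}

/-- wedge of two vectors -/
noncomputable def w (a b : V) : ⋀[k]^2 V := exteriorPower.ιMulti k 2 ![a, b]

lemma upd0 (a b c : V) : Function.update ![a, b] 0 c = ![c, b] := by
  ext i; fin_cases i <;> rfl

lemma upd1 (a b c : V) : Function.update ![a, b] 1 c = ![a, c] := by
  ext i; fin_cases i <;> rfl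

lemma w_add_left (a a' b : V) : w k (a + a') b = w k a b + w k a' b := by
  have h := (exteriorPower.ιMulti k 2 (M := V)).map_update_add ![a, b] 0 a a'
  simp only [upd0, upd1] at h
  exact h

lemma w_add_right (a b b' : V) : w k a (b + b') = w k a b + w k a b' := by
  have h := (exteriorPower.ιMulti k 2 (M := V)).map_update_add ![a, b] 1 b b'
  simp only [upd0, upd1] at h
  exact h

lemma w_smul_right (t : k) (a b : V) : w k a (t • b) = t • w k a b := by
  have h := (exteriorPower.ιMulti k 2 (M := V)).map_update_smul ![a, b] 1 t b
  simp only [upd0, upd1] at h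
  exact h

lemma w_self (a : V) : w k a a = 0 :=
  (exteriorPower.ιMulti k 2 (M := V)).map_eq_zero_of_eq ![a, a] (i := 0) (j := 1) rfl (by decide)

lemma w_zero_right (a : V) : w k a 0 = 0 := by
  simpa using w_smul_right k 0 a 0

lemma w_zero_left (a : V) : w k 0 a = 0 := by
  simpa using w_add_left k 0 0 a

noncomputable instance : Bracket (SMHeis k V) (SMHeis k V) :=
  ⟨fun x y => inrL k V (w k (fstL k V x) (fstL k V y))⟩

lemma lie_def (x y : SMHeis k V) : ⁅x, y⁆ = inrL k V (w k (fstL k V x) (fstL k V y)) := rfl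

lemma fst_inr (z : ⋀[k]^2 V) : fstL k V (inrL k V z) = 0 := rfl
lemma snd_inr (z : ⋀[k]^2 V) : sndL k V (inrL k V z) = z := rfl
lemma fst_inl (z : V) : fstL k V (inlL k V z) = z := rfl

noncomputable instance : LieRing (SMHeis k V) where
  add_lie x y z := by simp only [lie_def, map_add, w_add_left]
  lie_add x y z := by simp only [lie_def, map_add, w_add_right]
  lie_self x := by simp only [lie_def, w_self, map_zero]
  leibniz_lie x y z := by
    simp only [lie_def, fst_inr, w_zero_left, w_zero_right, map_zero, add_zero]

noncomputable instance : LieAlgebra k (SMHeis k V) where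
  lie_smul t x y := by simp only [lie_def, map_smul, w_smul_right]

end SMHeis

open SMHeis in
/-- For abelian `L`, the free Lie algebra maps to `⋀²L` compatibly. -/
lemma sm_exists_wedge (k : Type*) [Field k] (L : Type*) [LieRing L] [LieAlgebra k L]
    [IsLieAbelian L] (X : Type*) (π : FreeLieAlgebra k X →ₗ⁅k⁆ L) :
    ∃ Φ : FreeLieAlgebra k X →ₗ[k] (⋀[k]^2 L), ∀ x y, Φ ⁅x, y⁆ = w k (π x) (π y) := by
  let p : FreeLieAlgebra k X →ₗ⁅k⁆ SMHeis k L :=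
    FreeLieAlgebra.lift k (fun x => inlL k L (π (FreeLieAlgebra.of k x)))
  let f : SMHeis k L →ₗ⁅k⁆ L :=
    { fstL k L with
      map_lie' := by
        intro x y
        change fstL k L ⁅x, y⁆ = ⁅_, _⁆
        rw [lie_def, fst_inr]
        exact (trivial_lie_zero L L _ _).symm }
  have hf : f.comp p = π := by
    ext x
    change fstL k L (p _) = _
    simp [p, fst_inl]
  have hf' : ∀ x, fstL k L (p x) = π x := fun x => by rw [← hf]; rfl
  refine ⟨sndL k L ∘ₗ (p : FreeLieAlgebra k X →ₗ[k] SMHeis k L), fun x y => ?_⟩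
  change sndL k L (p ⁅x, y⁆) = _
  rw [LieHom.map_lie, lie_def, snd_inr, hf', hf']

/-- A finite-dimensional Lie algebra `L` of dimension `n` is abelian if and only if
`dim M(L) = n(n−1)/2`. -/
theorem isLieAbelian_iff_schur_multiplier_dim
    (k : Type*) [Field k] (L : Type*) [LieRing L] [LieAlgebra k L]
    [FiniteDimensional k L] (n : ℕ) (hn : Module.finrank k L = n)
    (X : Type*) (π : FreeLieAlgebra k X →ₗ⁅k⁆ L) (hπ : Function.Surjective π) :
    IsLieAbelian L ↔ 2 * schurMultiplierDim k π = n * (n - 1) := by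
  obtain ⟨s, hs⟩ := (π : FreeLieAlgebra k X →ₗ[k] L).exists_rightInverse_of_surjective
    (LinearMap.range_eq_top.2 hπ)
  have hs' : ∀ a, π (s a) = a := fun a => LinearMap.congr_fun hs a
  set R : LieIdeal k (FreeLieAlgebra k X) := π.ker with hR
  set G := LieModule.lowerCentralSeries k (FreeLieAlgebra k X) (FreeLieAlgebra k X) 1 with hG
  set S : Submodule k (FreeLieAlgebra k X) := (R ⊓ G).toSubmodule with hS
  set T : Submodule k (FreeLieAlgebra k X) :=
    (⁅R, (⊤ : LieIdeal k (FreeLieAlgebra k X))⁆ : LieIdeal k (FreeLieAlgebra k X)).toSubmodule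
    with hT
  have hdim : schurMultiplierDim k π = Module.finrank k (S.map T.mkQ) := by
    change Module.finrank k (↥S ⧸ T.comap S.subtype) = _
    have e := (T.mkQ ∘ₗ S.subtype).quotKerEquivRange
    rw [LinearMap.ker_comp, Submodule.ker_mkQ, LinearMap.range_comp, Submodule.range_subtype] at e
    exact e.finrank_eq
  have hGspan : G.toSubmodule = Submodule.span k {z | ∃ x y : FreeLieAlgebra k X, ⁅x, y⁆ = z} := by
    rw [hG, LieModule.lowerCentralSeries_succ, LieModule.lowerCentralSeries_zero,
      LieSubmodule.lieIdeal_oper_eq_linear_span']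
    simp
  have hRT : ∀ x y, π x = 0 → ⁅x, y⁆ ∈ T := fun x y hx =>
    LieSubmodule.lie_mem_lie (LieHom.mem_ker.2 hx) (LieSubmodule.mem_top y)
  have hRT' : ∀ x y, π y = 0 → ⁅x, y⁆ ∈ T := fun x y hy => by
    rw [← lie_skew]; exact T.neg_mem (hRT _ _ hy)
  have hTspan : T = Submodule.span k {z | ∃ x y : FreeLieAlgebra k X, π x = 0 ∧ ⁅x, y⁆ = z} := by
    rw [hT, LieSubmodule.lieIdeal_oper_eq_linear_span']
    simp [R]
  have hTS : T ≤ S := by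
    rw [hTspan, Submodule.span_le]
    rintro _ ⟨x, y, hx, rfl⟩
    refine ⟨?_, ?_⟩
    · change ⁅x, y⁆ ∈ R
      rw [hR, LieHom.mem_ker, LieHom.map_lie, hx, zero_lie]
    · change ⁅x, y⁆ ∈ G.toSubmodule
      rw [hGspan]
      exact Submodule.subset_span ⟨x, y, rfl⟩
  let A : L [⋀^Fin 2]→ₗ[k] (FreeLieAlgebra k X ⧸ T) :=
    { toFun := fun v => T.mkQ ⁅s (v 0), s (v 1)⁆
      map_update_add' := by
        intro _ v i x y
        fin_cases i <;> simp
      map_update_smul' := by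
        intro _ v i c x
        fin_cases i <;> simp
      map_eq_zero_of_eq' := by
        intro v i j h hij
        have : v 0 = v 1 := by fin_cases i <;> fin_cases j <;> simp_all
        simp [this] }
  let φ := exteriorPower.alternatingMapLinearEquiv A
  have hφ : ∀ a b, φ (SMHeis.w k a b) = T.mkQ ⁅s a, s b⁆ := fun a b => by
    simp [φ, SMHeis.w, A]
  have hφ2 : ∀ x y, φ (SMHeis.w k (π x) (π y)) = T.mkQ ⁅x, y⁆ := fun x y => by
    rw [hφ, ← sub_eq_zero, ← map_sub, ← LinearMap.mem_ker, Submodule.ker_mkQ]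
    have : ⁅s (π x), s (π y)⁆ - ⁅x, y⁆ = ⁅s (π x) - x, s (π y)⁆ + ⁅x, s (π y) - y⁆ := by
      simp
    rw [this]
    exact T.add_mem (hRT _ _ (by simp [hs'])) (hRT' _ _ (by simp [hs']))
  have hwspan : (⊤ : Submodule k (⋀[k]^2 L)) =
      Submodule.span k {z | ∃ a b : L, SMHeis.w k a b = z} := by
    rw [← exteriorPower.ιMulti_span]
    congr 1
    ext z
    constructor
    · rintro ⟨v, rfl⟩
      refine ⟨v 0, v 1, ?_⟩
      unfold SMHeis.w
      congr 1
      ext i; fin_cases i <;> rfl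
    · rintro ⟨a, b, rfl⟩
      exact ⟨_, rfl⟩
  have hrange : φ.range = G.toSubmodule.map T.mkQ := by
    rw [LinearMap.range_eq_map, hwspan, hGspan, Submodule.map_span, Submodule.map_span]
    congr 1
    ext z
    constructor
    · rintro ⟨_, ⟨a, b, rfl⟩, rfl⟩
      exact ⟨_, ⟨s a, s b, rfl⟩, (hφ a b).symm⟩
    · rintro ⟨_, ⟨x, y, rfl⟩, rfl⟩
      exact ⟨_, ⟨π x, π y, rfl⟩, hφ2 x y⟩
  have hfin : Module.finrank k (⋀[k]^2 L) = n.choose 2 := by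
    rw [exteriorPower.finrank_eq, hn]
  have hch : 2 * n.choose 2 = n * (n - 1) := by
    rw [Nat.choose_two_right]
    exact Nat.mul_div_cancel' (Nat.even_mul_pred_self n).two_dvd
  rw [hdim, ← hch, Nat.mul_right_inj two_ne_zero]
  constructor
  · intro hab
    obtain ⟨Φ, hΦ⟩ := sm_exists_wedge k L X π
    have hTΦ : T ≤ LinearMap.ker Φ := by
      rw [hTspan, Submodule.span_le]
      rintro _ ⟨x, y, hx, rfl⟩
      change Φ _ = 0
      rw [hΦ, hx, SMHeis.w_zero_left]
    have hinj : Function.Injective φ := by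
      have : (T.liftQ Φ hTΦ) ∘ₗ φ = LinearMap.id := by
        refine LinearMap.ext_on (s := {z | ∃ a b : L, SMHeis.w k a b = z}) hwspan.symm ?_
        rintro _ ⟨a, b, rfl⟩
        rw [LinearMap.comp_apply, hφ, Submodule.mkQ_apply, Submodule.liftQ_apply, hΦ, hs', hs']
        rfl
      exact Function.LeftInverse.injective (g := T.liftQ Φ hTΦ) (LinearMap.congr_fun this)
    have hSG : S = G.toSubmodule := by
      have : G.toSubmodule ≤ R.toSubmodule := by
        rw [hGspan, Submodule.span_le]
        rintro _ ⟨x, y, rfl⟩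
        change _ ∈ R
        rw [hR, LieHom.mem_ker, LieHom.map_lie, trivial_lie_zero]
      rw [hS, LieSubmodule.inf_toSubmodule]
      exact inf_eq_right.2 this
    rw [hSG, ← hrange, LinearMap.finrank_range_of_inj hinj, hfin]
  · intro h
    have hle : S.map T.mkQ ≤ φ.range := by
      rw [hrange]
      exact Submodule.map_mono (fun x hx => hx.2)
    have heq : S.map T.mkQ = φ.range := by
      apply Submodule.eq_of_le_of_finrank_le hle
      rw [h, ← hfin]
      exact LinearMap.finrank_range_le φ
    refine ⟨fun a b => ?_⟩
    have hm : T.mkQ ⁅s a, s b⁆ ∈ S.map T.mkQ := by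
      rw [heq, ← hφ]; exact ⟨_, rfl⟩
    obtain ⟨z, hz, hzz⟩ := hm
    have h1 : z - ⁅s a, s b⁆ ∈ T := by
      rw [← Submodule.ker_mkQ T, LinearMap.mem_ker, map_sub, hzz, sub_self]
    have h2 : ⁅s a, s b⁆ ∈ S := by
      simpa using S.sub_mem hz (hTS h1)
    have h3 : ⁅s a, s b⁆ ∈ R := h2.1
    rw [hR, LieHom.mem_ker, LieHom.map_lie, hs', hs'] at h3
    exact h3
end

section
/- Let L be a Lie algebra over a field (or commutative ring) and let i ≥ 3. For all x₁, x₂, …, x_{i+1} ∈ L, the following identity holds: [[x₁, x₂, …, x_i]_l, x_{i+1}] + [[x_{i+1}, [x₁, x₂, …, x_{i−1}]_l], x_i] + [[[x_i, x_{i+1}]_r, [x₁, …, x_{i−2}]_l], x_{i−1}] + [[[x_{i−1}, x_i, x_{i+1}]_r, [x₁, x₂, …, x_{i−3}]_l], x_{i−2}] + ⋯ + [[[x₃, …, x_{i+1}]_r, x₁], x₂] + [[x₂, …, x_{i+1}]_r, x₁] = 0. That is, the sum [[x₁,…,x_i]_l, x_{i+1}] + Σ_{k=1}^{i−1} [[[x_{i+2−k},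 …, x_{i+1}]_r, [x₁, …, x_{i−k}]_l], x_{i+1−k}] + [[x₂, …, x_{i+1}]_r, x₁] equals zero. -/
/-- The left-normed bracket `[x₁, x₂, …, x_k]_l = [⋯[[x₁, x₂], x₃], ⋯, x_k]` of a list of
elements of a Lie algebra (a single element gives that element, the empty list gives `0`). -/
def leftNormedBracket {L : Type*} [LieRing L] : List L → L
  | [] => 0
  | x :: t => t.foldl (fun a b => ⁅a, b⁆) x

/-- The right-normed bracket `[x₁, x₂, …, x_k]_r = [x₁, [⋯[x_{k−2}, [x_{k−1}, x_k]]⋯]]` of a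
list of elements of a Lie algebra (a single element gives that element, the empty list `0`). -/
def rightNormedBracket {L : Type*} [LieRing L] : List L → L
  | [] => 0
  | [x] => x
  | x :: t => ⁅x, rightNormedBracket t⁆

theorem leftNormed_aux {L : Type*} [LieRing L] (x : ℕ → L) (m : ℕ) :
    leftNormedBracket ((List.range' 1 (m + 2)).map x)
      = ⁅leftNormedBracket ((List.range' 1 (m + 1)).map x), x (m + 2)⁆ := by
  rw [List.range'_concat, List.range'_succ]
  simp [leftNormedBracket, List.foldl_append, show 1 + (m + 1) = m + 2 by omega]

theorem rightNormed_aux {L : Type*} [LieRing L] (x : ℕ → L) (a m : ℕ) :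
    rightNormedBracket ((List.range' a (m + 2)).map x)
      = ⁅x a, rightNormedBracket ((List.range' (a + 1) (m + 1)).map x)⁆ := by
  simp [List.range'_succ, rightNormedBracket]

theorem partial_aux {L : Type*} [LieRing L] (x : ℕ → L) (i n : ℕ) (h : n + 1 ≤ i) :
    ∑ k ∈ Finset.Icc 1 n,
          ⁅⁅rightNormedBracket ((List.range' (i + 2 - k) k).map x),
              leftNormedBracket ((List.range' 1 (i - k)).map x)⁆, x (i + 1 - k)⁆
      = ⁅leftNormedBracket ((List.range' 1 (i - n)).map x),
          rightNormedBracket ((List.range' (i + 1 - n) (n + 1)).map x)⁆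
        - ⁅leftNormedBracket ((List.range' 1 i).map x), x (i + 1)⁆ := by
  induction n with
  | zero => simp [rightNormedBracket]
  | succ n ih =>
    rw [Finset.sum_Icc_succ_top (by omega), ih (by omega)]
    obtain ⟨m, rfl⟩ : ∃ m, i = m + n + 2 := ⟨i - n - 2, by omega⟩
    rw [show m + n + 2 - n = m + 2 by omega, show m + n + 2 + 1 - n = m + 3 by omega,
      show m + n + 2 + 2 - (n + 1) = m + 3 by omega, show m + n + 2 - (n + 1) = m + 1 by omega,
      show m + n + 2 + 1 - (n + 1) = m + 2 by omega, leftNormed_aux, rightNormed_aux]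
    generalize leftNormedBracket ((List.range' 1 (m + 1)).map x) = l
    generalize rightNormedBracket ((List.range' (m + 2 + 1) (n + 1)).map x) = r
    generalize x (m + 2) = y
    have h1 := leibniz_lie l y r
    have h2 : ⁅⁅r, l⁆, y⁆ = ⁅y, ⁅l, r⁆⁆ := by
      rw [← lie_skew, ← lie_skew l r, lie_neg]
    rw [h2, h1]
    abel

/-- For `i ≥ 3` and elements `x₁, …, x_{i+1}` of a Lie algebra `L`:
`[[x₁,…,x_i]_l, x_{i+1}] + ∑_{k=1}^{i−1} [[[x_{i+2−k},…,x_{i+1}]_r, [x₁,…,x_{i−k}]_l], x_{i+1−k}]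
  + [[x₂,…,x_{i+1}]_r, x₁] = 0`. -/
theorem leftNormed_rightNormed_identity
    (R : Type*) (L : Type*) [CommRing R] [LieRing L] [LieAlgebra R L]
    (i : ℕ) (hi : 3 ≤ i) (x : ℕ → L) :
    ⁅leftNormedBracket ((List.range' 1 i).map x), x (i + 1)⁆
      + ∑ k ∈ Finset.Icc 1 (i - 1),
          ⁅⁅rightNormedBracket ((List.range' (i + 2 - k) k).map x),
              leftNormedBracket ((List.range' 1 (i - k)).map x)⁆, x (i + 1 - k)⁆
      + ⁅rightNormedBracket ((List.range' 2 i).map x), x 1⁆ = 0 := by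
  rw [partial_aux x i (i - 1) (by omega), show i - (i - 1) = 1 by omega,
    show i + 1 - (i - 1) = 2 by omega, show i - 1 + 1 = i by omega]
  simp [leftNormedBracket]
  rw [← lie_skew, neg_add_cancel]
end

section
/- Let L be a finite-dimensional nilpotent Lie algebra of nilpotency class c ≥ 2 over a field k. Then dim(M(L)) ≤ dim(M(L/γ_c(L))) + (dim(L/γ₂(L)) − 1)·dim(γ_c(L)), where M(·) denotes the Schur multiplier computed from any free presentation via the Hopf formula. -/
namespace SchurAux

theorem rank_chain {k V : Type*} [Field k] [AddCommGroup V] [Module k V]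
    (A B C : Submodule k V) (hAB : A ≤ B) (hBC : B ≤ C) :
    Module.rank k (↥C ⧸ A.comap C.subtype) =
      Module.rank k (↥C ⧸ B.comap C.subtype) + Module.rank k (↥B ⧸ A.comap B.subtype) := by
  have hle : A.comap C.subtype ≤ B.comap C.subtype := Submodule.comap_mono hAB
  let g : (↥C ⧸ A.comap C.subtype) →ₗ[k] (↥C ⧸ B.comap C.subtype) := Submodule.factor hle
  have hg : Function.Surjective g := Submodule.factor_surjective hle
  let i : ↥B →ₗ[k] (↥C ⧸ A.comap C.subtype) :=
    (A.comap C.subtype).mkQ ∘ₗ Submodule.inclusion hBC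
  have hik : LinearMap.ker i = A.comap B.subtype := by
    ext x
    simp [i, LinearMap.mem_ker]
  have hir : LinearMap.range i = LinearMap.ker g := by
    ext x
    constructor
    · rintro ⟨y, rfl⟩
      simp [i, g, LinearMap.mem_ker]
    · obtain ⟨y, rfl⟩ := Submodule.mkQ_surjective _ x
      intro hy
      have hy' : (y : V) ∈ B := by
        simpa [g, LinearMap.mem_ker] using hy
      exact ⟨⟨y, hy'⟩, rfl⟩
  rw [LinearMap.rank_eq_of_surjective hg, ← hir, ← hik]
  congr 1
  exact (LinearMap.quotKerEquivRange i).rank_eq.symm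

theorem lcs_one {k L : Type*} [Field k] [LieRing L] [LieAlgebra k L] {p : L → Prop}
    (h0 : p 0) (hadd : ∀ x y, p x → p y → p (x + y)) (hs : ∀ (t : k) x, p x → p (t • x))
    (hl : ∀ x y : L, p ⁅x, y⁆) {z : L} (hz : z ∈ LieModule.lowerCentralSeries k L L 1) : p z := by
  rw [LieModule.lowerCentralSeries_succ, ← LieSubmodule.mem_toSubmodule,
    LieSubmodule.lieIdeal_oper_eq_linear_span'] at hz
  induction hz using Submodule.span_induction with
  | mem x h => obtain ⟨a, _, b, _, rfl⟩ := h; exact hl a b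
  | zero => exact h0
  | add x y _ _ hx hy => exact hadd x y hx hy
  | smul t x _ hx => exact hs t x hx

theorem lie_mem_lcs_one {k L : Type*} [Field k] [LieRing L] [LieAlgebra k L] (x y : L) :
    ⁅x, y⁆ ∈ LieModule.lowerCentralSeries k L L 1 := by
  rw [LieModule.lowerCentralSeries_succ]
  exact LieSubmodule.lie_mem_lie (LieSubmodule.mem_top x) (by simp)

/-- Numerator of the Hopf formula. -/
def num {k A L : Type*} [Field k] [LieRing A] [LieAlgebra k A] [LieRing L] [LieAlgebra k L]
    (π : A →ₗ⁅k⁆ L) : Submodule k A :=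
  (π.ker ⊓ LieModule.lowerCentralSeries k A A 1).toSubmodule

/-- Denominator of the Hopf formula. -/
def den {k A L : Type*} [Field k] [LieRing A] [LieAlgebra k A] [LieRing L] [LieAlgebra k L]
    (π : A →ₗ⁅k⁆ L) : Submodule k A :=
  (⁅π.ker, (⊤ : LieIdeal k A)⁆ : LieIdeal k A).toSubmodule

section
variable {k A L : Type*} [Field k] [LieRing A] [LieAlgebra k A] [LieRing L] [LieAlgebra k L]
  (π : A →ₗ⁅k⁆ L)

theorem mem_num {x : A} : x ∈ num π ↔ π x = 0 ∧ x ∈ LieModule.lowerCentralSeries k A A 1 := by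
  simp [num]

theorem lie_mem_den {x : A} (hx : π x = 0) (y : A) : ⁅x, y⁆ ∈ den π :=
  LieSubmodule.lie_mem_lie (LieHom.mem_ker.2 hx) (LieSubmodule.mem_top y)

theorem lie_mem_den' (x : A) {y : A} (hy : π y = 0) : ⁅x, y⁆ ∈ den π := by
  rw [← lie_skew]; exact neg_mem (lie_mem_den π hy x)

theorem den_le {N : Submodule k A} (h : ∀ x y, π x = 0 → ⁅x, y⁆ ∈ N) : den π ≤ N := by
  unfold den
  rw [LieSubmodule.lieIdeal_oper_eq_linear_span', Submodule.span_le]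
  rintro _ ⟨x, hx, y, _, rfl⟩
  exact h x y (LieHom.mem_ker.1 hx)

theorem den_le_num : den π ≤ num π :=
  den_le π fun x y hx => (mem_num π).2 ⟨by simp [hx], lie_mem_lcs_one x y⟩

theorem diff_mem (φ : A →ₗ⁅k⁆ A) (h : ∀ x, π (φ x) = π x) {x : A}
    (hx : x ∈ LieModule.lowerCentralSeries k A A 1) : φ x - x ∈ den π := by
  refine lcs_one (k := k) (p := fun x => φ x - x ∈ den π) ?_ ?_ ?_ ?_ hx
  · simp
  · intro x y hx hy
    have := add_mem hx hy
    rw [map_add]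
    convert this using 1
    abel
  · intro t x hx
    rw [map_smul, ← smul_sub]
    exact Submodule.smul_mem _ _ hx
  · intro x y
    have e : φ ⁅x, y⁆ - ⁅x, y⁆ = ⁅φ x - x, φ y⁆ + ⁅x, φ y - y⁆ := by
      simp
    rw [e]
    exact add_mem (lie_mem_den π (by simp [h]) _) (lie_mem_den' π _ (by simp [h]))

theorem map_num {B : Type*} [LieRing B] [LieAlgebra k B] (ρ : B →ₗ⁅k⁆ L) (φ : A →ₗ⁅k⁆ B)
    (h : ∀ x, ρ (φ x) = π x) {x : A} (hx : x ∈ num π) : φ x ∈ num ρ := by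
  rw [mem_num] at hx ⊢
  refine ⟨by rw [h, hx.1], ?_⟩
  refine lcs_one (k := k) (p := fun x => φ x ∈ LieModule.lowerCentralSeries k B B 1)
    ?_ ?_ ?_ ?_ hx.2
  · simp
  · intro x y hx hy; rw [map_add]; exact add_mem hx hy
  · intro t x hx; rw [map_smul]; exact SMulMemClass.smul_mem _ hx
  · intro x y; rw [LieHom.map_lie]; exact lie_mem_lcs_one _ _

theorem map_den {B : Type*} [LieRing B] [LieAlgebra k B] (ρ : B →ₗ⁅k⁆ L) (φ : A →ₗ⁅k⁆ B)
    (h : ∀ x, ρ (φ x) = π x) : den π ≤ (den ρ).comap (φ : A →ₗ[k] B) :=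
  den_le π fun x y hx => by
    simp only [Submodule.mem_comap, LieHom.coe_toLinearMap, LieHom.map_lie]
    exact lie_mem_den ρ (by rw [h, hx]) _

/-- Induced map on multipliers. -/
noncomputable def ind {B : Type*} [LieRing B] [LieAlgebra k B] (ρ : B →ₗ⁅k⁆ L) (φ : A →ₗ⁅k⁆ B)
    (h : ∀ x, ρ (φ x) = π x) :
    (↥(num π) ⧸ (den π).comap (num π).subtype) →ₗ[k]
      (↥(num ρ) ⧸ (den ρ).comap (num ρ).subtype) :=
  Submodule.mapQ _ _ ((φ : A →ₗ[k] B).restrict (fun _ hx => map_num π ρ φ h hx))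
    (fun _ hx => map_den π ρ φ h hx)

theorem ind_ind {B : Type*} [LieRing B] [LieAlgebra k B] (ρ : B →ₗ⁅k⁆ L) (φ : A →ₗ⁅k⁆ B)
    (h : ∀ x, ρ (φ x) = π x) (ψ : B →ₗ⁅k⁆ A) (h' : ∀ x, π (ψ x) = ρ x) (z) :
    ind ρ π ψ h' (ind π ρ φ h z) = z := by
  obtain ⟨y, rfl⟩ := Submodule.mkQ_surjective _ z
  refine (Submodule.Quotient.eq _).2 ?_
  exact diff_mem π (ψ.comp φ) (by simp [h, h']) ((mem_num π).1 y.2).2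

end

theorem dim_eq {k X Y L : Type*} [Field k] [LieRing L] [LieAlgebra k L]
    (π : FreeLieAlgebra k X →ₗ⁅k⁆ L) (hπ : Function.Surjective π)
    (ρ : FreeLieAlgebra k Y →ₗ⁅k⁆ L) (hρ : Function.Surjective ρ) :
    Module.finrank k (↥(num π) ⧸ (den π).comap (num π).subtype) =
      Module.finrank k (↥(num ρ) ⧸ (den ρ).comap (num ρ).subtype) := by
  have ex : ∃ φ : FreeLieAlgebra k X →ₗ⁅k⁆ FreeLieAlgebra k Y, ∀ x, ρ (φ x) = π x := by
    choose s hs using hρ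
    refine ⟨FreeLieAlgebra.lift k (fun x => s (π (FreeLieAlgebra.of k x))), ?_⟩
    refine fun x => LieHom.congr_fun (f := ρ.comp _) (g := π) (FreeLieAlgebra.hom_ext ?_) x
    intro x; simp [hs]
  have ex' : ∃ φ : FreeLieAlgebra k Y →ₗ⁅k⁆ FreeLieAlgebra k X, ∀ x, π (φ x) = ρ x := by
    choose s hs using hπ
    refine ⟨FreeLieAlgebra.lift k (fun x => s (ρ (FreeLieAlgebra.of k x))), ?_⟩
    refine fun x => LieHom.congr_fun (f := π.comp _) (g := ρ) (FreeLieAlgebra.hom_ext ?_) x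
    intro x; simp [hs]
  obtain ⟨φ, h⟩ := ex
  obtain ⟨ψ, h'⟩ := ex'
  exact (LinearEquiv.ofLinearMap (ind π ρ φ h) (ind ρ π ψ h')
    (LinearMap.ext fun z => ind_ind ρ π ψ h' φ h z)
    (LinearMap.ext fun z => ind_ind π ρ φ h ψ h' z)).finrank_eq

/-- The main estimate. `q` kills exactly the central ideal `G`, contained in `γ₂`. -/
theorem main {k A L Q : Type*} [Field k] [LieRing A] [LieAlgebra k A] [LieRing L] [LieAlgebra k L]
    [LieRing Q] [LieAlgebra k Q] [FiniteDimensional k L]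
    (π : A →ₗ⁅k⁆ L) (hπ : Function.Surjective π) (G : Submodule k L) (q : L →ₗ⁅k⁆ Q)
    (hq : ∀ x, q x = 0 ↔ x ∈ G) (hG : ∀ x ∈ G, ∀ y : L, ⁅x, y⁆ = 0)
    (hG1 : G ≤ (LieModule.lowerCentralSeries k L L 1).toSubmodule) :
    Module.finrank k (↥(num π) ⧸ (den π).comap (num π).subtype) ≤
      Module.finrank k (↥(num (q.comp π)) ⧸ (den (q.comp π)).comap (num (q.comp π)).subtype) +
      (Module.finrank k (L ⧸ (LieModule.lowerCentralSeries k L L 1).toSubmodule) - 1) *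
        Module.finrank k G := by
  set π' := q.comp π with hπ'
  set D := (LieModule.lowerCentralSeries k L L 1).toSubmodule with hD
  have hker : ∀ x, π' x = 0 ↔ π x ∈ G := fun x => hq (π x)
  have h1 : den π ≤ den π' := den_le π fun x y hx =>
    lie_mem_den π' ((hker x).2 (by rw [hx]; exact zero_mem _)) y
  have h2 : den π' ≤ num π := den_le π' fun x y hx => (mem_num π).2
    ⟨by rw [LieHom.map_lie]; exact hG _ ((hker x).1 hx) _, lie_mem_lcs_one x y⟩
  have h3 : num π ≤ num π' := fun x hx => by
    rw [mem_num] at hx ⊢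
    exact ⟨(hker x).2 (by rw [hx.1]; exact zero_mem _), hx.2⟩
  have lift1 : ∀ y ∈ D, ∃ x ∈ LieModule.lowerCentralSeries k A A 1, π x = y := by
    intro y hy
    refine lcs_one (k := k)
      (p := fun y => ∃ x ∈ LieModule.lowerCentralSeries k A A 1, π x = y) ?_ ?_ ?_ ?_ hy
    · exact ⟨0, zero_mem _, by simp⟩
    · rintro _ _ ⟨x, hx, rfl⟩ ⟨y, hy, rfl⟩
      exact ⟨x + y, add_mem hx hy, by simp⟩
    · rintro t _ ⟨x, hx, rfl⟩
      exact ⟨t • x, SMulMemClass.smul_mem _ hx, by simp⟩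
    · intro x y
      obtain ⟨x, rfl⟩ := hπ x
      obtain ⟨y, rfl⟩ := hπ y
      exact ⟨⁅x, y⁆, lie_mem_lcs_one x y, by simp⟩
  -- quotient of numerators
  let f : ↥(num π') →ₗ[k] ↥G :=
    (π : A →ₗ[k] L).restrict (fun x hx => (hker x).1 ((mem_num π').1 hx).1)
  have hf : Function.Surjective f := by
    rintro ⟨y, hy⟩
    obtain ⟨x, hx, rfl⟩ := lift1 y (hG1 hy)
    exact ⟨⟨x, (mem_num π').2 ⟨(hker x).2 hy, hx⟩⟩, rfl⟩
  have hfk : LinearMap.ker f = (num π).comap (num π').subtype := by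
    ext x
    have hx := (mem_num π').1 x.2
    simp only [LinearMap.mem_ker, Submodule.mem_comap, Submodule.subtype_apply, mem_num, hx.2,
      and_true]
    rw [Subtype.ext_iff]
    rfl
  have eG : (↥(num π') ⧸ (num π).comap (num π').subtype) ≃ₗ[k] G :=
    (Submodule.quotEquivOfEq _ _ hfk.symm).trans (f.quotKerEquivOfSurjective hf)
  have fG : FiniteDimensional k (↥(num π') ⧸ (num π).comap (num π').subtype) :=
    eG.symm.finiteDimensional
  -- bound on the denominators
  obtain ⟨W, hW⟩ := Submodule.exists_isCompl D
  obtain ⟨σ, hσ⟩ := (π : A →ₗ[k] L).exists_rightInverse_of_surjective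
    (LinearMap.range_eq_top.2 hπ)
  have hσ' : ∀ x, π (σ x) = x := fun x => LinearMap.congr_fun hσ x
  let β : ↥G →ₗ[k] ↥W →ₗ[k] A :=
    ((LieModule.toEnd k A A : A →ₗ[k] Module.End k A).compl₁₂ (σ ∘ₗ G.subtype) (σ ∘ₗ W.subtype))
  let b : TensorProduct k G W →ₗ[k] (A ⧸ den π) := (den π).mkQ ∘ₗ TensorProduct.lift β
  have kill : ∀ s n, π s ∈ G → π n ∈ D → ⁅s, n⁆ ∈ den π := by
    intro s n hs hn
    obtain ⟨m, hm, hmn⟩ := lift1 _ hn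
    have e : ⁅s, n⁆ = ⁅s, n - m⁆ + ⁅s, m⁆ := by simp
    rw [e]
    refine add_mem (lie_mem_den' π _ (by simp [hmn])) ?_
    refine lcs_one (k := k) (p := fun m => ⁅s, m⁆ ∈ den π) ?_ ?_ ?_ ?_ hm
    · simp
    · intro x y hx hy; rw [lie_add]; exact add_mem hx hy
    · intro t x hx; rw [lie_smul]; exact Submodule.smul_mem _ _ hx
    · intro x y
      rw [leibniz_lie]
      refine add_mem (lie_mem_den π ?_ _) (lie_mem_den' π _ ?_)
      · rw [LieHom.map_lie]; exact hG _ hs _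
      · rw [LieHom.map_lie]; exact hG _ hs _
  have hrange : den π' ≤ (LinearMap.range b).comap (den π).mkQ := by
    refine den_le π' fun s x hs => ?_
    have hs' := (hker s).1 hs
    have hx : π x ∈ D ⊔ W := by rw [hW.sup_eq_top]; trivial
    obtain ⟨d, hd, w, hw, hdw⟩ := Submodule.mem_sup.1 hx
    refine ⟨TensorProduct.tmul k ⟨π s, hs'⟩ ⟨w, hw⟩, ?_⟩
    have : b (TensorProduct.tmul k ⟨π s, hs'⟩ ⟨w, hw⟩) = (den π).mkQ ⁅σ (π s), σ w⁆ := rfl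
    rw [this, ← sub_eq_zero, ← map_sub, Submodule.mkQ_apply, Submodule.Quotient.mk_eq_zero]
    have e : ⁅σ (π s), σ w⁆ - ⁅s, x⁆ = ⁅σ (π s) - s, σ w⁆ + ⁅s, σ w - x⁆ := by simp
    rw [e]
    refine add_mem (lie_mem_den π (by simp [hσ']) _) (kill _ _ hs' ?_)
    have : π (σ w - x) = - d := by rw [map_sub, hσ', ← hdw]; abel
    rw [this]
    exact neg_mem hd
  let j : (↥(den π') ⧸ (den π).comap (den π').subtype) →ₗ[k] LinearMap.range b :=
    Submodule.liftQ _ (LinearMap.codRestrict _ ((den π).mkQ ∘ₗ (den π').subtype)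
      (fun x => hrange x.2)) (fun x hx => by
        rw [LinearMap.mem_ker, Subtype.ext_iff]
        simpa using hx)
  have hj : Function.Injective j := by
    rw [← LinearMap.ker_eq_bot, LinearMap.ker_eq_bot']
    intro z hz
    obtain ⟨y, rfl⟩ := Submodule.mkQ_surjective _ z
    rw [Subtype.ext_iff] at hz
    simpa [j] using hz
  have fj : FiniteDimensional k (↥(den π') ⧸ (den π).comap (den π').subtype) :=
    Module.Finite.of_injective j hj
  have bj : Module.finrank k (↥(den π') ⧸ (den π).comap (den π').subtype) ≤
      Module.finrank k G * Module.finrank k (L ⧸ D) := by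
    refine (LinearMap.finrank_le_finrank_of_injective hj).trans ?_
    refine (LinearMap.finrank_range_le b).trans ?_
    rw [Module.finrank_tensorProduct,
      (Submodule.quotientEquivOfIsCompl D W hW).finrank_eq]
  have r1 := rank_chain _ _ _ h1 h2
  have r2 := rank_chain _ _ _ h2 h3
  by_cases hfin : FiniteDimensional k (↥(num π) ⧸ (den π).comap (num π).subtype)
  · have c1 := Module.rank_lt_aleph0 k (↥(num π) ⧸ (den π).comap (num π).subtype)
    rw [r1] at c1
    have c2 := (Cardinal.add_lt_aleph0_iff.1 c1).1
    have cG := Module.rank_lt_aleph0 k (↥(num π') ⧸ (num π).comap (num π').subtype)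
    have cj := Module.rank_lt_aleph0 k (↥(den π') ⧸ (den π).comap (den π').subtype)
    have t1 := congrArg Cardinal.toNat r1
    have t2 := congrArg Cardinal.toNat r2
    rw [Cardinal.toNat_add c2 cj] at t1
    rw [Cardinal.toNat_add cG c2] at t2
    have eGf := eG.finrank_eq
    simp only [Module.finrank] at t1 t2 eGf bj ⊢
    rw [eGf] at t2
    generalize Cardinal.toNat (Module.rank k (L ⧸ D)) = d at *
    generalize Cardinal.toNat (Module.rank k G) = g at *
    rw [t1, t2]
    rcases d with _ | d
    · rw [Nat.mul_zero] at bj; omega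
    · rw [Nat.add_sub_cancel]
      nlinarith
  · rw [Module.finrank_of_not_finite hfin]
    exact Nat.zero_le _

end SchurAux

/-- If `L` is a finite-dimensional nilpotent Lie algebra of class `c ≥ 2`, then
`dim M(L) ≤ dim M(L/γ_c(L)) + (dim(L/γ₂(L)) − 1)·dim(γ_c(L))`.
Here `γ_c(L)` is `LieModule.lowerCentralSeries k L L (c-1)`. -/
theorem schur_multiplier_dim_le_quotient
    (k : Type*) [Field k] (L : Type*) [LieRing L] [LieAlgebra k L]
    [FiniteDimensional k L] (c : ℕ) (hc : 2 ≤ c)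
    (hc₁ : LieModule.lowerCentralSeries k L L c = ⊥)
    (hc₂ : LieModule.lowerCentralSeries k L L (c - 1) ≠ ⊥)
    (X : Type*) (π : FreeLieAlgebra k X →ₗ⁅k⁆ L) (hπ : Function.Surjective π)
    (Y : Type*)
    (ρ : FreeLieAlgebra k Y →ₗ⁅k⁆
      (L ⧸ (LieModule.lowerCentralSeries k L L (c - 1) : LieIdeal k L)))
    (hρ : Function.Surjective ρ) :
    schurMultiplierDim k π ≤
      schurMultiplierDim k ρ
        + (Module.finrank k
            (L ⧸ (LieModule.lowerCentralSeries k L L 1 : LieIdeal k L).toSubmodule) - 1)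
          * Module.finrank k
              (LieModule.lowerCentralSeries k L L (c - 1) : LieSubmodule k L L) := by
  have hsucc : c - 1 + 1 = c := by omega
  let q : L →ₗ⁅k⁆ (L ⧸ (LieModule.lowerCentralSeries k L L (c - 1) : LieIdeal k L)) :=
    { ((LieSubmodule.Quotient.mk' (LieModule.lowerCentralSeries k L L (c - 1)) : L →ₗ⁅k,L⁆ _) :
        L →ₗ[k] _) with
      map_lie' := fun {x y} => LieSubmodule.Quotient.mk_bracket _ x y }
  have hqs : Function.Surjective q := LieSubmodule.Quotient.surjective_mk' _
  have key := SchurAux.main π hπ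
    (LieModule.lowerCentralSeries k L L (c - 1)).toSubmodule q
    (fun x => LieSubmodule.Quotient.mk_eq_zero _) (fun x hx y => ?_) ?_
  · rw [SchurAux.dim_eq (q.comp π) (hqs.comp hπ) ρ hρ] at key
    exact key
  · have : ⁅y, x⁆ ∈ LieModule.lowerCentralSeries k L L c := by
      rw [← hsucc, LieModule.lowerCentralSeries_succ]
      exact LieSubmodule.lie_mem_lie (LieSubmodule.mem_top y) hx
    rw [hc₁, LieSubmodule.mem_bot] at this
    rw [← lie_skew, this, neg_zero]
  · exact LieModule.antitone_lowerCentralSeries k L L (by omega)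
end

section
/- Let L be a finite-dimensional nilpotent Lie algebra of nilpotency class c over a field k, let π : F → L be a free presentation with R = ker(π), and let 2 ≤ i ≤ c. Then the quotient vector space [F, γ_i(F) + R] / [γ_{i+1}(F) + R, F] has dimension at most dim(L/γ₂(L)) · dim(γ_i(L)/γ_{i+1}(L)). (Here γ_i(F) + R denotes the Lie ideal of F generated by γ_i(F) and R, and for i = c one has γ_{c+1}(F) + R = R, recovering the quotient [F, γ_c(F) + R]/[R, F].) -/
theorem aux_rep {k V : Type*} [Field k] [AddCommGroup V] [Module k V] [FiniteDimensional k V]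
    (W : Submodule k V) : ∃ v : Fin (Module.finrank k (V ⧸ W)) → V, ∀ y : V,
      ∃ c : Fin (Module.finrank k (V ⧸ W)) → k, y - ∑ j, c j • v j ∈ W := by
  let b := Module.finBasis k (V ⧸ W)
  choose v hv using fun j => W.mkQ_surjective (b j)
  refine ⟨v, fun y => ⟨fun j => b.repr (W.mkQ y) j, ?_⟩⟩
  apply (Submodule.Quotient.mk_eq_zero W).1
  rw [← Submodule.mkQ_apply, map_sub, map_sum]
  simp only [map_smul, hv, b.sum_repr, sub_self]

theorem aux_pull {k F L : Type*} [Field k] [LieRing L] [LieAlgebra k L] [LieRing F]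
    [LieAlgebra k F] (π : F →ₗ⁅k⁆ L) (hπ : Function.Surjective π) (n : ℕ) (x : F)
    (hx : π x ∈ LieModule.lowerCentralSeries k L L n) :
    x ∈ LieModule.lowerCentralSeries k F F n ⊔ π.ker := by
  rw [← LieIdeal.lowerCentralSeries_map_eq n hπ] at hx
  rw [← LieIdeal.comap_map_eq]
  · simpa [LieIdeal.mem_comap] using hx
  · exact congr_arg SetLike.coe (LieIdeal.coe_map_of_surjective hπ)

theorem aux_push {k F L : Type*} [Field k] [LieRing L] [LieAlgebra k L] [LieRing F]
    [LieAlgebra k F] (π : F →ₗ⁅k⁆ L) (hπ : Function.Surjective π) (n : ℕ) (x : F)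
    (hx : x ∈ LieModule.lowerCentralSeries k F F n ⊔ π.ker) :
    π x ∈ LieModule.lowerCentralSeries k L L n := by
  rw [LieSubmodule.mem_sup] at hx
  obtain ⟨y, hy, z, hz, rfl⟩ := hx
  rw [LieHom.mem_ker] at hz
  rw [map_add, hz, add_zero, ← LieIdeal.lowerCentralSeries_map_eq n hπ]
  exact LieIdeal.mem_map hy

theorem aux_jac {k F : Type*} [Field k] [LieRing F] [LieAlgebra k F] (n : ℕ) :
    ⁅(LieModule.lowerCentralSeries k F F 1 : LieIdeal k F), LieModule.lowerCentralSeries k F F n⁆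
      ≤ LieModule.lowerCentralSeries k F F (n + 2) := by
  have key : ∀ (m : ℕ) (a y : F), y ∈ LieModule.lowerCentralSeries k F F m →
      ⁅a, y⁆ ∈ LieModule.lowerCentralSeries k F F (m + 1) := by
    intro m a y hy
    rw [LieModule.lowerCentralSeries_succ]
    exact LieSubmodule.lie_mem_lie (LieSubmodule.mem_top a) hy
  rw [LieSubmodule.lie_le_iff]
  intro x hx y hy
  rw [LieModule.lowerCentralSeries_succ, ← LieSubmodule.mem_toSubmodule,
    LieSubmodule.lieIdeal_oper_eq_linear_span'] at hx
  induction hx using Submodule.span_induction with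
  | mem x h =>
    obtain ⟨a, -, b, -, rfl⟩ := h
    rw [lie_lie]
    exact sub_mem (key _ _ _ (key _ _ _ hy)) (key _ _ _ (key _ _ _ hy))
  | zero => simp
  | add a b _ _ ha hb => rw [add_lie]; exact add_mem ha hb
  | smul t a _ ha => rw [smul_lie]; exact (LieModule.lowerCentralSeries k F F (n + 2)).smul_mem t ha

/-- Let `L` be a finite-dimensional nilpotent Lie algebra of class `c`, `π : F → L` a free
presentation with `R = ker π`, and `2 ≤ i ≤ c`.  Then the vector space
`[F, γ_i(F) + R] / [γ_{i+1}(F) + R, F]` has dimension at most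
`dim(L/γ₂(L)) · dim(γ_i(L)/γ_{i+1}(L))`.
Here `γ_j` is `LieModule.lowerCentralSeries _ _ _ (j-1)`. -/
theorem dim_bracket_quotient_le
    (k : Type*) [Field k] (L : Type*) [LieRing L] [LieAlgebra k L]
    [FiniteDimensional k L] (c : ℕ)
    (hc₁ : LieModule.lowerCentralSeries k L L c = ⊥)
    (hc₂ : LieModule.lowerCentralSeries k L L (c - 1) ≠ ⊥)
    (X : Type*) (π : FreeLieAlgebra k X →ₗ⁅k⁆ L) (hπ : Function.Surjective π)
    (i : ℕ) (hi₂ : 2 ≤ i) (hic : i ≤ c) :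
    let F := FreeLieAlgebra k X
    let R : LieIdeal k F := π.ker
    -- `[F, γ_i(F) + R]`
    let A : Submodule k F :=
      (⁅(⊤ : LieIdeal k F),
          LieModule.lowerCentralSeries k F F (i - 1) ⊔ R⁆ : LieIdeal k F).toSubmodule
    -- `[γ_{i+1}(F) + R, F]`
    let B : Submodule k F :=
      (⁅(LieModule.lowerCentralSeries k F F i ⊔ R : LieIdeal k F),
          (⊤ : LieIdeal k F)⁆ : LieIdeal k F).toSubmodule
    -- `γ_i(L)` as a subspace of `L`
    let Gi : Submodule k L := (LieModule.lowerCentralSeries k L L (i - 1)).toSubmodule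
    Module.rank k (↥A ⧸ B.comap A.subtype) ≤
      ((Module.finrank k
          (L ⧸ (LieModule.lowerCentralSeries k L L 1 : LieIdeal k L).toSubmodule)
        * Module.finrank k
            (↥Gi ⧸ ((LieModule.lowerCentralSeries k L L i).toSubmodule).comap Gi.subtype) : ℕ)
        : Cardinal) := by
  intro F R A B Gi
  obtain ⟨n, rfl⟩ : ∃ n, i = n + 1 := ⟨i - 1, by omega⟩
  obtain ⟨u, hu⟩ := aux_rep (LieModule.lowerCentralSeries k L L 1 : LieIdeal k L).toSubmodule
  obtain ⟨v, hv⟩ := aux_rep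
    (((LieModule.lowerCentralSeries k L L (n + 1)).toSubmodule).comap Gi.subtype)
  choose u' hu' using fun j => hπ (u j)
  choose v' hv' using fun j => hπ (v j : L)
  let w := fun p : Fin _ × Fin _ => B.mkQ ⁅u' p.1, v' p.2⁆
  have hBR : ∀ x y : F, y ∈ LieModule.lowerCentralSeries k F F (n + 1) ⊔ R → ⁅x, y⁆ ∈ B := by
    intro x y hy
    change ⁅x, y⁆ ∈ ⁅(LieModule.lowerCentralSeries k F F (n + 1) ⊔ R : LieIdeal k F),
          (⊤ : LieIdeal k F)⁆
    rw [LieSubmodule.lie_comm]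
    exact LieSubmodule.lie_mem_lie (LieSubmodule.mem_top x) hy
  have hBR' : ∀ x y : F, x ∈ LieModule.lowerCentralSeries k F F (n + 1) ⊔ R → ⁅x, y⁆ ∈ B := by
    intro x y hx
    rw [← lie_skew]
    exact neg_mem (hBR _ _ hx)
  have hB2 : ∀ x y : F, x ∈ LieModule.lowerCentralSeries k F F 1 ⊔ R →
      y ∈ LieModule.lowerCentralSeries k F F n ⊔ R → ⁅x, y⁆ ∈ B := by
    intro x y hx hy
    rw [LieSubmodule.mem_sup] at hx hy
    obtain ⟨x, hx, r, hr, rfl⟩ := hx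
    obtain ⟨y, hy, s, hs, rfl⟩ := hy
    rw [add_lie, lie_add]
    refine add_mem (add_mem ?_ ?_) ?_
    · have h1 := aux_jac (k := k) n (LieSubmodule.lie_mem_lie hx hy)
      rw [LieModule.lowerCentralSeries_succ, LieSubmodule.lie_comm] at h1
      exact LieSubmodule.mono_lie le_sup_left le_rfl h1
    · exact hBR _ _ (LieSubmodule.mem_sup_right hs)
    · exact hBR' _ _ (LieSubmodule.mem_sup_right hr)
  have hA : A ≤ (Submodule.span k (Set.range w)).comap B.mkQ := by
    change (⁅(⊤ : LieIdeal k F), LieModule.lowerCentralSeries k F F n ⊔ R⁆ :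
      LieIdeal k F).toSubmodule ≤ _
    rw [LieSubmodule.lieIdeal_oper_eq_linear_span', Submodule.span_le]
    rintro _ ⟨x, -, y, hy, rfl⟩
    obtain ⟨c, hc⟩ := hu (π x)
    obtain ⟨d, hd⟩ := hv ⟨π y, aux_push π hπ n y hy⟩
    have hx1 : x - ∑ j, c j • u' j ∈ LieModule.lowerCentralSeries k F F 1 ⊔ R := by
      apply aux_pull π hπ
      simpa [map_sub, map_sum, hu'] using hc
    have hy1 : y - ∑ j, d j • v' j ∈ LieModule.lowerCentralSeries k F F (n + 1) ⊔ R := by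
      apply aux_pull π hπ
      simpa [map_sub, map_sum, hv'] using hd
    have e : ⁅x, y⁆ = ⁅x - ∑ j, c j • u' j, y⁆ + (⁅∑ j, c j • u' j, y - ∑ j, d j • v' j⁆
        + ⁅∑ j, c j • u' j, ∑ j, d j • v' j⁆) := by
      rw [sub_lie, lie_sub]; abel
    have z1 := (Submodule.Quotient.mk_eq_zero B).2 (hB2 _ _ hx1 hy)
    have z2 := (Submodule.Quotient.mk_eq_zero B).2 (hBR (∑ j, c j • u' j) _ hy1)
    change B.mkQ ⁅x, y⁆ ∈ Submodule.span k (Set.range w)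
    rw [e, map_add, map_add, Submodule.mkQ_apply, Submodule.mkQ_apply, z1, z2, zero_add, zero_add,
      sum_lie, map_sum]
    refine sum_mem fun a _ => ?_
    rw [lie_sum, map_sum]
    refine sum_mem fun b _ => ?_
    rw [smul_lie, lie_smul, map_smul, map_smul]
    exact Submodule.smul_mem _ _ (Submodule.smul_mem _ _ (Submodule.subset_span ⟨(a, b), rfl⟩))
  let g : (↥A ⧸ B.comap A.subtype) →ₗ[k] Submodule.span k (Set.range w) :=
    (Submodule.liftQ _ (B.mkQ.comp A.subtype) (by
      rw [LinearMap.ker_comp, Submodule.ker_mkQ])).codRestrict _ (by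
      intro q
      obtain ⟨a, rfl⟩ := Submodule.mkQ_surjective _ q
      exact hA a.2)
  have hg : Function.Injective g := by
    rw [← LinearMap.ker_eq_bot, LinearMap.ker_codRestrict]
    apply Submodule.ker_liftQ_eq_bot
    rw [LinearMap.ker_comp, Submodule.ker_mkQ]
  have r1 := LinearMap.rank_le_of_injective g hg
  refine r1.trans ((rank_span_le _).trans ?_)
  have := Cardinal.mk_range_le_lift (f := w)
  simpa using this
end

section
/- Let L be a finite-dimensional nilpotent Lie algebra of nilpotency class c over a field k with dim(L) = n and dim(γ₂(L)) = m, let π : F → L be a free presentation with R = ker(π), and let i satisfy 2 ≤ i ≤ min(n−m, c). Then the quotient vector space [F, γ_i(F) + R] / [γ_{i+1}(F) + R, F] has dimension at most (n−m)·dim(γ_i(L)/γ_{i+1}(L)) − (n−m−i). (Equivalently, the kernel of the surjective linear map λ_i : (L/γ₂(L)) ⊗ (γ_i(L)/γ_{i+1}(L)) → [F, γ_i(F)+R]/[γ_{i+1}(F)+R, F] induced by the bracket has dimension at least n−m−i.) -/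
section Helpers
open Module Submodule

lemma aux_map2_finrank {k V W Z : Type*} [Field k] [AddCommGroup V] [Module k V]
    [AddCommGroup W] [Module k W] [AddCommGroup Z] [Module k Z]
    [FiniteDimensional k V] [FiniteDimensional k W] (β : V →ₗ[k] W →ₗ[k] Z)
    (p : Submodule k V) (q : Submodule k W) :
    FiniteDimensional k (map₂ β p q) ∧ finrank k (map₂ β p q) ≤ finrank k p * finrank k q := by
  rw [TensorProduct.map₂_eq_range_lift_comp_mapIncl, ← finrank_tensorProduct (R := k)]
  exact ⟨inferInstance, LinearMap.finrank_range_le _⟩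

lemma aux_linalg {k V W Z : Type*} [Field k] [AddCommGroup V] [Module k V]
    [AddCommGroup W] [Module k W] [AddCommGroup Z] [Module k Z]
    [FiniteDimensional k V] [FiniteDimensional k W] (β : V →ₗ[k] W →ₗ[k] Z)
    (S : Submodule k V) (i : ℕ) (hS : finrank k S ≤ i) (w₀ : W) (hw : w₀ ≠ 0)
    (h : ∀ x, β x w₀ ∈ map₂ β S ⊤) :
    finrank k (map₂ β ⊤ ⊤) + (finrank k V - i) ≤ finrank k V * finrank k W := by
  obtain ⟨S', hS'⟩ := S.exists_isCompl
  obtain ⟨W', hW'⟩ := (k ∙ w₀).exists_isCompl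
  have hle : map₂ β ⊤ ⊤ ≤ map₂ β S ⊤ ⊔ map₂ β S' W' := by
    rw [← hW'.sup_eq_top, map₂_sup_right, hW'.sup_eq_top]
    refine sup_le ?_ ?_
    · refine map₂_le.2 fun x _ y hy => ?_
      obtain ⟨a, rfl⟩ := mem_span_singleton.1 hy
      rw [map_smul]
      exact mem_sup_left (smul_mem _ _ (h x))
    · rw [← hS'.sup_eq_top, map₂_sup_left]
      exact sup_le_sup (map₂_le_map₂_right le_top) le_rfl
  have h1 := finrank_add_eq_of_isCompl hS'
  have h2 := finrank_add_eq_of_isCompl hW'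
  rw [finrank_span_singleton hw] at h2
  obtain ⟨f1, b1⟩ := aux_map2_finrank β S ⊤
  obtain ⟨f2, b2⟩ := aux_map2_finrank β S' W'
  have b3 := finrank_mono hle
  have b4 := finrank_add_le_finrank_add_finrank (map₂ β S ⊤) (map₂ β S' W')
  rw [finrank_top] at b1
  rw [← h2] at b1 ⊢
  rw [← h1]
  have : finrank k S + finrank k S' - i ≤ finrank k S' := by omega
  nlinarith

/-- Special spanning elements of the lower central series. -/
def auxD (k F : Type*) [Field k] [LieRing F] [LieAlgebra k F] (j : ℕ) : Set F :=
  {u | u ∈ LieModule.lowerCentralSeries k F F j ∧ ∃ S : Submodule k F,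
    FiniteDimensional k S ∧ finrank k S ≤ j + 1 ∧
    ∀ t, ∀ x ∈ LieModule.lowerCentralSeries k F F t,
      ⁅u, x⁆ ∈ map₂ (LieAlgebra.ad k F : F →ₗ[k] Module.End k F) S
        (LieModule.lowerCentralSeries k F F (t + j)).toSubmodule}

lemma aux_lie_mem {k F : Type*} [Field k] [LieRing F] [LieAlgebra k F] (j : ℕ) (y m : F)
    (hm : m ∈ LieModule.lowerCentralSeries k F F j) :
    ⁅y, m⁆ ∈ LieModule.lowerCentralSeries k F F (j + 1) := by
  rw [LieModule.lowerCentralSeries_succ]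
  exact LieSubmodule.lie_mem_lie (LieSubmodule.mem_top y) hm

lemma aux_map2_le {k F : Type*} [Field k] [LieRing F] [LieAlgebra k F] (j : ℕ)
    (S : Submodule k F) :
    map₂ (LieAlgebra.ad k F : F →ₗ[k] Module.End k F) S
        (LieModule.lowerCentralSeries k F F j).toSubmodule ≤
      (LieModule.lowerCentralSeries k F F (j + 1)).toSubmodule :=
  map₂_le.2 fun y _ m hm => aux_lie_mem j y m hm

lemma aux_span {k F : Type*} [Field k] [LieRing F] [LieAlgebra k F] (j : ℕ) :
    (LieModule.lowerCentralSeries k F F j).toSubmodule ≤ span k (auxD k F j) := by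
  induction j with
  | zero =>
    intro u _
    refine subset_span ⟨by simp, k ∙ u, inferInstance, ?_, ?_⟩
    · simpa using finrank_span_le_card (R := k) ({u} : Set F)
    · intro t x hx
      exact apply_mem_map₂ (LieAlgebra.ad k F : F →ₗ[k] Module.End k F)
        (mem_span_singleton_self u) hx
  | succ j ih =>
    rw [LieModule.lowerCentralSeries_succ, LieSubmodule.lieIdeal_oper_eq_linear_span', span_le]
    rintro _ ⟨y, -, m, hm, rfl⟩
    have key : span k (auxD k F j) ≤
        (span k (auxD k F (j + 1))).comap (LieAlgebra.ad k F y : F →ₗ[k] F) := by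
      rw [span_le]
      rintro u ⟨hu, S, hfd, hS, hb⟩
      refine subset_span ⟨aux_lie_mem j y u hu, (k ∙ y) ⊔ S, inferInstance, ?_, ?_⟩
      · have := finrank_add_le_finrank_add_finrank (k ∙ y) S
        have h1 : finrank k (k ∙ y) ≤ 1 := by
          simpa using finrank_span_le_card (R := k) ({y} : Set F)
        omega
      · intro t x hx
        change ⁅⁅y, u⁆, x⁆ ∈ _
        rw [lie_lie]
        refine sub_mem ?_ ?_
        · exact apply_mem_map₂ (LieAlgebra.ad k F : F →ₗ[k] Module.End k F)
            (mem_sup_left (mem_span_singleton_self y)) (aux_map2_le _ _ (hb t x hx))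
        · have := hb (t + 1) _ (aux_lie_mem t y x hx)
          rw [show t + (j + 1) = t + 1 + j by ring]
          exact map₂_le_map₂_left le_sup_right this
    exact key (ih hm)

lemma aux_gamma2 {k F : Type*} [Field k] [LieRing F] [LieAlgebra k F] (j : ℕ) (u x : F)
    (hu : u ∈ LieModule.lowerCentralSeries k F F 1)
    (hx : x ∈ LieModule.lowerCentralSeries k F F j) :
    ⁅u, x⁆ ∈ LieModule.lowerCentralSeries k F F (j + 2) := by
  have := aux_span (k := k) (F := F) 1 hu
  clear hu
  induction this using span_induction with
  | mem u h =>
    obtain ⟨-, S, -, -, hb⟩ := h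
    exact aux_map2_le _ _ (hb j x hx)
  | zero => simp
  | add a b _ _ ha hb =>
    rw [add_lie]; exact add_mem ha hb
  | smul c a _ ha => rw [smul_lie]; exact SMulMemClass.smul_mem c ha

end Helpers

/-- Let `L` be a finite-dimensional nilpotent Lie algebra of class `c` with `dim L = n` and
`dim γ₂(L) = m`, let `π : F → L` be a free presentation with `R = ker π`, and let
`2 ≤ i ≤ min(n−m, c)`.  Then the vector space `[F, γ_i(F) + R] / [γ_{i+1}(F) + R, F]` has
dimension at most `(n−m)·dim(γ_i(L)/γ_{i+1}(L)) − (n−m−i)` (stated additively, so that no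
truncated subtraction of naturals is involved).
Here `γ_j` is `LieModule.lowerCentralSeries _ _ _ (j-1)`. -/
theorem dim_bracket_quotient_le_sub
    (k : Type*) [Field k] (L : Type*) [LieRing L] [LieAlgebra k L]
    [FiniteDimensional k L] (c : ℕ)
    (hc₁ : LieModule.lowerCentralSeries k L L c = ⊥)
    (hc₂ : LieModule.lowerCentralSeries k L L (c - 1) ≠ ⊥)
    (n m : ℕ) (hn : Module.finrank k L = n)
    (hm : Module.finrank k (LieModule.lowerCentralSeries k L L 1 : LieSubmodule k L L) = m)
    (X : Type*) (π : FreeLieAlgebra k X →ₗ⁅k⁆ L) (hπ : Function.Surjective π)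
    (i : ℕ) (hi₂ : 2 ≤ i) (hic : i ≤ min (n - m) c) :
    let F := FreeLieAlgebra k X
    let R : LieIdeal k F := π.ker
    -- `[F, γ_i(F) + R]`
    let A : Submodule k F :=
      (⁅(⊤ : LieIdeal k F),
          LieModule.lowerCentralSeries k F F (i - 1) ⊔ R⁆ : LieIdeal k F).toSubmodule
    -- `[γ_{i+1}(F) + R, F]`
    let B : Submodule k F :=
      (⁅(LieModule.lowerCentralSeries k F F i ⊔ R : LieIdeal k F),
          (⊤ : LieIdeal k F)⁆ : LieIdeal k F).toSubmodule
    -- `γ_i(L)` as a subspace of `L`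
    let Gi : Submodule k L := (LieModule.lowerCentralSeries k L L (i - 1)).toSubmodule
    -- `dim(γ_i(L)/γ_{i+1}(L))`
    let d : ℕ := Module.finrank k
      (↥Gi ⧸ ((LieModule.lowerCentralSeries k L L i).toSubmodule).comap Gi.subtype)
    Module.rank k (↥A ⧸ B.comap A.subtype) + ((n - m - i : ℕ) : Cardinal) ≤
      (((n - m) * d : ℕ) : Cardinal) := by
  
  intro F R A B Gi d
  have hmapL : ∀ j, LieIdeal.map π (LieModule.lowerCentralSeries k F F j) =
      LieModule.lowerCentralSeries k L L j := fun j => LieIdeal.lowerCentralSeries_map_eq j hπ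
  have hup : ∀ j, ∀ x ∈ LieModule.lowerCentralSeries k F F j,
      π x ∈ LieModule.lowerCentralSeries k L L j := fun j x hx =>
    (hmapL j) ▸ LieIdeal.mem_map hx
  have hlift : ∀ j, ∀ y ∈ LieModule.lowerCentralSeries k L L j,
      ∃ x ∈ LieModule.lowerCentralSeries k F F j, π x = y := by
    intro j y hy
    rw [← hmapL j] at hy
    obtain ⟨x, hx⟩ := LieIdeal.mem_map_of_surjective hπ hy
    exact ⟨x, x.2, hx⟩
  have hpull : ∀ j, ∀ x : F, π x ∈ LieModule.lowerCentralSeries k L L j →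
      x ∈ LieModule.lowerCentralSeries k F F j ⊔ R := by
    intro j x hx
    obtain ⟨y, hy, hyx⟩ := hlift j _ hx
    rw [show x = y + (x - y) by abel]
    refine add_mem (LieSubmodule.mem_sup_left hy) (LieSubmodule.mem_sup_right ?_)
    change x - y ∈ π.ker
    rw [LieHom.mem_ker, map_sub, hyx, sub_self]
  have hi1 : i - 1 + 1 = i := by omega
  -- brackets killed by B
  have hBN : ∀ x y : F, y ∈ LieModule.lowerCentralSeries k F F i ⊔ R → ⁅x, y⁆ ∈ B := by
    intro x y hy
    change ⁅x, y⁆ ∈ (⁅(LieModule.lowerCentralSeries k F F i ⊔ R : LieIdeal k F),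
          (⊤ : LieIdeal k F)⁆ : LieIdeal k F)
    rw [LieSubmodule.lie_comm]
    exact LieSubmodule.lie_mem_lie (LieSubmodule.mem_top x) hy
  have hBN' : ∀ x y : F, x ∈ LieModule.lowerCentralSeries k F F i ⊔ R → ⁅x, y⁆ ∈ B := by
    intro x y hy
    exact LieSubmodule.lie_mem_lie hy (LieSubmodule.mem_top y)
  have hRB : ∀ x y : F, y ∈ R → ⁅x, y⁆ ∈ B := fun x y hy =>
    hBN x y (LieSubmodule.mem_sup_right hy)
  have hB2 : ∀ x y : F, x ∈ LieModule.lowerCentralSeries k F F 1 ⊔ R →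
      y ∈ LieModule.lowerCentralSeries k F F (i - 1) → ⁅x, y⁆ ∈ B := by
    intro x y hx hy
    obtain ⟨a, ha, b, hb, rfl⟩ := (LieSubmodule.mem_sup _ _ _).1 hx
    rw [add_lie]
    refine add_mem ?_ (hBN' _ _ (LieSubmodule.mem_sup_right hb))
    have h := aux_gamma2 (k := k) (i - 1) a y ha hy
    rw [show i - 1 + 2 = i + 1 by omega, LieModule.lowerCentralSeries_succ] at h
    change ⁅a, y⁆ ∈ (⁅(LieModule.lowerCentralSeries k F F i ⊔ R : LieIdeal k F),
          (⊤ : LieIdeal k F)⁆ : LieIdeal k F)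
    rw [LieSubmodule.lie_comm]
    exact LieSubmodule.mono_lie_right _ le_sup_left h
  -- the quotient spaces and sections
  let G2 : Submodule k L := (LieModule.lowerCentralSeries k L L 1).toSubmodule
  let Q : Submodule k Gi := ((LieModule.lowerCentralSeries k L L i).toSubmodule).comap Gi.subtype
  have hV : Module.finrank k (L ⧸ G2) = n - m := by
    have := Submodule.finrank_quotient_add_finrank G2
    have h2 : Module.finrank k G2 = m := hm
    omega
  let p : F →ₗ[k] L ⧸ G2 := G2.mkQ ∘ₗ (π : F →ₗ[k] L)
  have hp : Function.Surjective p := (Submodule.mkQ_surjective G2).comp hπ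
  have hpk : ∀ x, p x = 0 → x ∈ LieModule.lowerCentralSeries k F F 1 ⊔ R := by
    intro x hx
    exact hpull 1 x ((Submodule.Quotient.mk_eq_zero G2).1 hx)
  let Fi : Submodule k F := (LieModule.lowerCentralSeries k F F (i - 1)).toSubmodule
  let q0 : Fi →ₗ[k] Gi := ((π : F →ₗ[k] L).restrict (p := Fi) (q := Gi) (fun x hx => hup _ x hx))
  let q : Fi →ₗ[k] Gi ⧸ Q := Q.mkQ ∘ₗ q0
  have hq : Function.Surjective q := by
    refine (Submodule.mkQ_surjective Q).comp ?_
    rintro ⟨y, hy⟩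
    obtain ⟨x, hx, hxy⟩ := hlift _ y hy
    exact ⟨⟨x, hx⟩, Subtype.ext hxy⟩
  have hqk' : ∀ y : Fi, q y = 0 ↔ π (y : F) ∈ LieModule.lowerCentralSeries k L L i := by
    intro y
    exact Submodule.Quotient.mk_eq_zero Q
  obtain ⟨f, hf⟩ := LinearMap.exists_rightInverse_of_surjective p (LinearMap.range_eq_top.2 hp)
  obtain ⟨g, hg⟩ := LinearMap.exists_rightInverse_of_surjective q (LinearMap.range_eq_top.2 hq)
  have hf' : ∀ v, p (f v) = v := fun v => LinearMap.congr_fun hf v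
  have hg' : ∀ v, q (g v) = v := fun v => LinearMap.congr_fun hg v
  let ad : F →ₗ[k] F →ₗ[k] F := (LieAlgebra.ad k F : F →ₗ[k] Module.End k F)
  let β : (L ⧸ G2) →ₗ[k] (Gi ⧸ Q) →ₗ[k] (F ⧸ B) :=
    (ad.compr₂ B.mkQ).compl₁₂ f (Fi.subtype ∘ₗ g)
  have hβ : ∀ (x : F) (y : Fi), B.mkQ ⁅x, (y : F)⁆ = β (p x) (q y) := by
    intro x y
    change B.mkQ ⁅x, (y : F)⁆ = B.mkQ ⁅f (p x), (g (q y) : F)⁆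
    rw [← sub_eq_zero, ← map_sub]
    refine (Submodule.Quotient.mk_eq_zero B).2 ?_
    have e : ⁅x, (y : F)⁆ - ⁅f (p x), (g (q y) : F)⁆ =
        ⁅x - f (p x), (y : F)⁆ + ⁅f (p x), ((y - g (q y) : Fi) : F)⁆ := by
      simp [sub_lie, lie_sub]
    rw [e]
    refine add_mem (hB2 _ _ (hpk _ ?_) y.2) (hBN _ _ (hpull i _ ((hqk' _).1 ?_)))
    · rw [map_sub, hf', sub_self]
    · rw [map_sub, hg', sub_self]
  -- nonvanishing
  have hne : ¬ ∀ u ∈ auxD k F (i - 1), π u ∈ LieModule.lowerCentralSeries k L L i := by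
    intro hall
    have hstep : LieModule.lowerCentralSeries k L L (i - 1) ≤
        LieModule.lowerCentralSeries k L L i := by
      intro y hy
      obtain ⟨x, hx, rfl⟩ := hlift _ y hy
      have : Submodule.span k (auxD k F (i - 1)) ≤
          (LieModule.lowerCentralSeries k L L i).toSubmodule.comap (π : F →ₗ[k] L) :=
        Submodule.span_le.2 hall
      exact this (aux_span (i - 1) hx)
    have hall2 : ∀ t, LieModule.lowerCentralSeries k L L (i - 1) ≤
        LieModule.lowerCentralSeries k L L (i - 1 + t) := by
      intro t
      induction t with
      | zero => exact le_rfl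
      | succ t ih =>
        refine hstep.trans ?_
        rw [← add_assoc, LieModule.lowerCentralSeries_succ]
        conv_lhs => rw [← hi1, LieModule.lowerCentralSeries_succ]
        exact LieSubmodule.mono_lie_right _ ih
    have hic' : i ≤ c := hic.trans (min_le_right _ _)
    have h1 := hall2 (c - (i - 1))
    rw [show i - 1 + (c - (i - 1)) = c by omega, hc₁] at h1
    apply hc₂
    rw [eq_bot_iff]
    exact (LieModule.antitone_lowerCentralSeries k L L (by omega)).trans h1
  push Not at hne
  obtain ⟨u, ⟨huF, S, hSf, hSd, hSb⟩, hu⟩ := hne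
  have hw : q ⟨u, huF⟩ ≠ 0 := fun h => hu ((hqk' _).1 h)
  have hfin := aux_linalg β (S.map p) i
    ((Submodule.finrank_map_le p S).trans (by omega)) (q ⟨u, huF⟩) hw (by
      intro v
      obtain ⟨x, rfl⟩ := hp v
      rw [← hβ]
      have h0 := hSb 0 x (by simp)
      rw [zero_add] at h0
      have hle : Submodule.map₂ (LieAlgebra.ad k F : F →ₗ[k] Module.End k F) S
          (LieModule.lowerCentralSeries k F F (i - 1)).toSubmodule ≤
          (Submodule.map₂ β (S.map p) ⊤).comap B.mkQ := by
        refine Submodule.map₂_le.2 fun a ha y hy => ?_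
        change B.mkQ ⁅a, ((⟨y, hy⟩ : Fi) : F)⁆ ∈ Submodule.map₂ β (S.map p) ⊤
        rw [hβ]
        exact Submodule.apply_mem_map₂ _ (Submodule.mem_map_of_mem ha) Submodule.mem_top
      change B.mkQ ⁅x, u⁆ ∈ _
      rw [← lie_skew, map_neg]
      exact neg_mem (hle h0))
  rw [hV] at hfin
  let θ : A →ₗ[k] F ⧸ B := B.mkQ ∘ₗ A.subtype
  have hθk : LinearMap.ker θ = B.comap A.subtype := by
    rw [LinearMap.ker_comp, Submodule.ker_mkQ]
  have hθr : LinearMap.range θ ≤ Submodule.map₂ β ⊤ ⊤ := by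
    have hA : A ≤ (Submodule.map₂ β ⊤ ⊤).comap B.mkQ := by
      change (⁅(⊤ : LieIdeal k F),
          LieModule.lowerCentralSeries k F F (i - 1) ⊔ R⁆ : LieIdeal k F).toSubmodule ≤ _
      rw [LieSubmodule.lieIdeal_oper_eq_linear_span', Submodule.span_le]
      rintro _ ⟨x, -, y, hy, rfl⟩
      obtain ⟨a, ha, b, hb, rfl⟩ := (LieSubmodule.mem_sup _ _ _).1 hy
      change B.mkQ ⁅x, a + b⁆ ∈ Submodule.map₂ β ⊤ ⊤
      have hz : B.mkQ ⁅x, b⁆ = 0 := (Submodule.Quotient.mk_eq_zero B).2 (hRB x b hb)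
      rw [lie_add, map_add, hz, add_zero]
      have := hβ x ⟨a, ha⟩
      change B.mkQ ⁅x, a⁆ = _ at this
      rw [this]
      exact Submodule.apply_mem_map₂ _ Submodule.mem_top Submodule.mem_top
    rintro _ ⟨a, rfl⟩
    exact hA a.2
  have hfd := (aux_map2_finrank β ⊤ ⊤).1
  have hrank : Module.rank k (↥A ⧸ B.comap A.subtype) ≤
      (Module.finrank k (Submodule.map₂ β ⊤ ⊤) : Cardinal) := by
    rw [Module.finrank_eq_rank, ← hθk, (θ.quotKerEquivRange).rank_eq]
    exact Submodule.rank_mono hθr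
  calc _ ≤ (Module.finrank k (Submodule.map₂ β ⊤ ⊤) : Cardinal) + ((n - m - i : ℕ) : Cardinal) :=
        add_le_add hrank le_rfl
    _ ≤ _ := by exact_mod_cast hfin
end
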